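/- arXiv:1801.02182 — 2 statements merged into one kernel-verified Lean document; each statement's English description precedes it below -/
import Mathlib

section
/- ∫₀¹ [₂F₁(1/3,2/3;1|x)]²·(1−x)^{−1/2} dx = (3√3/2^{11/3})·(Γ(1/3)/√π)⁶·₅F₄(1/3,1/3,1/2,1/2,1/2; 5/6,5/6,5/6,1 | 1). -/
open Real MeasureTheory Set

/-- Modified Bessel function `I₀(t) = (1/π)∫₀^π exp(t cos θ) dθ`. -/
noncomputable def I0 (t : ℝ) : ℝ := (1 / π) * ∫ θ in (0:ℝ)..π, exp (t * cos θ)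

/-- Modified Bessel function `K₀(t) = ∫₀^∞ exp(−t cosh u) du`. -/
noncomputable def K0 (t : ℝ) : ℝ := ∫ u in Ioi (0:ℝ), exp (-(t * Real.cosh u))

/-- Rising factorial `(a)ₙ = a(a+1)⋯(a+n−1)`. -/
noncomputable def ris (a : ℝ) (n : ℕ) : ℝ := ∏ k ∈ Finset.range n, (a + k)

/-- Generalized hypergeometric series `ₚF_q(a; b | x)`. -/
noncomputable def pFq (a b : List ℝ) (x : ℝ) : ℝ :=
  ∑' n : ℕ, ((a.map fun p => ris p n).prod / (b.map fun q => ris q n).prod) * x ^ n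
    / (n.factorial : ℝ)

/-!
Write `W(a; s)` for the very-well-poised series with base `a` and upper parameters `s`. The
expansion of a `₂F₁` in Jacobi polynomials has coefficients given by Gauss's theorem, so Parseval's
identity turns the integral of a product of two `₂F₁`s against a beta weight into a very-well-poised
series. Here that series is `W(1/2; 1/3, 2/3, 1/3, 2/3, 1/2)`. Parseval itself is the termwise
summation of a double series with nonnegative terms, whose finite inner sums are the terminating
Dougall `₅F₄` sum, a limiting case of the terminating Dougall `₇F₆` sum.

Bailey's transformation, again an interchange of two summations between a terminating `₇F₆` and a
nonterminating `₅F₄` Dougall sum, carries this series to `W(1/3; 1/3, 1/2, 1/6, 1/2, 1/2)`. In the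
latter the parameter `1/6` is half of the base, so its factor cancels the very-well-poised one and
what remains is the `₅F₄` of the theorem. The reflection and duplication formulas evaluate the
constants.
-/

open Filter Topology ProbabilityTheory

lemma ris_eq_ascPochhammer_eval (a : ℝ) (n : ℕ) : ris a n = (ascPochhammer ℝ n).eval a := by
  induction n with
  | zero => simp [ris]
  | succ n ih => rw [ascPochhammer_succ_eval, ← ih, ris, Finset.prod_range_succ, ris]

@[simp]
lemma ris_zero (a : ℝ) : ris a 0 = 1 := by simp [ris]

lemma ris_succ (a : ℝ) (n : ℕ) : ris a (n + 1) = ris a n * (a + n) :=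
  Finset.prod_range_succ _ n

lemma ris_add (a : ℝ) (m n : ℕ) : ris a (m + n) = ris a m * ris (a + m) n := by
  simp only [ris, Finset.prod_range_add, Nat.cast_add, add_assoc]

lemma ris_succ_left (a : ℝ) (n : ℕ) : ris a (n + 1) = a * ris (a + 1) n := by
  rw [add_comm n, ris_add]
  simp [ris]

lemma ris_pos {a : ℝ} (ha : 0 < a) (n : ℕ) : 0 < ris a n :=
  Finset.prod_pos fun _ _ => by positivity

lemma ris_le_ris {a b : ℝ} (ha : 0 < a) (hab : a ≤ b) (n : ℕ) : ris a n ≤ ris b n :=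
  Finset.prod_le_prod (fun _ _ => by positivity) fun _ _ => by linarith

lemma ris_one (n : ℕ) : ris 1 n = (n.factorial : ℝ) := by
  rw [ris_eq_ascPochhammer_eval, ascPochhammer_eval_one]

lemma ris_neg_natCast (n j : ℕ) : ris (-n) j = (-1) ^ j * (n.descFactorial j : ℝ) := by
  rw [ris_eq_ascPochhammer_eval, ascPochhammer_eval_neg_eq_descPochhammer,
    descPochhammer_eval_eq_descFactorial]

lemma ris_neg_natCast_eq_zero {n j : ℕ} (h : n < j) : ris (-n) j = 0 := by
  rw [ris_neg_natCast, Nat.descFactorial_of_lt h, Nat.cast_zero, mul_zero]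

lemma ris_one_sub_sub (x : ℝ) (m j : ℕ) :
    ris (1 - x - (m + j : ℕ)) j = (-1) ^ j * ris (x + m) j := by
  rw [← Finset.card_range j, ← Finset.prod_const, Finset.card_range, ris, ris,
    ← Finset.prod_range_reflect, ← Finset.prod_mul_distrib]
  refine Finset.prod_congr rfl fun k hk => ?_
  rw [Nat.sub_sub, Nat.cast_sub (by have := Finset.mem_range.mp hk; omega)]
  push_cast
  ring

lemma Gamma_add_natCast_eq_ris_mul {a : ℝ} (ha : 0 < a) (n : ℕ) :
    Gamma (a + n) = ris a n * Gamma a := by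
  induction n with
  | zero => simp
  | succ n ih =>
    rw [Nat.cast_succ, ← add_assoc, Gamma_add_one (by positivity), ih, ris_succ]
    ring

/-- The `n`-th term of the very-well-poised hypergeometric series with base `a` and further
upper parameters `s`, each `b ∈ s` being paired with the lower parameter `1 + a - b`. The usual
factor `(1 + a / 2)ₙ / (a / 2)ₙ` is replaced by its multiple `a + 2 * n`, so that the zeroth term
is `a`. -/
noncomputable def wellPoised (a : ℝ) (s : List ℝ) (n : ℕ) : ℝ :=
  (a + 2 * n) * ris a n / n.factorial * (s.map fun b => ris b n / ris (1 + a - b) n).prod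

section TerminatingDougall

lemma ris_succ_div_ris_succ (x y : ℝ) (k n : ℕ) :
    ris x (k + 1) / ris y (n + 1) = ris x k / ris y n * ((x + k) / (y + n)) := by
  rw [ris_succ, ris_succ, mul_div_mul_comm]

lemma ris_div_ris_succ (x y : ℝ) (k n : ℕ) :
    ris x k / ris y (n + 1) = ris x k / ris y n * (1 / (y + n)) := by
  rw [ris_succ, div_mul_eq_div_mul_one_div]

lemma ris_succ_div_ris_succ_left (x y : ℝ) (n : ℕ) :
    ris x (n + 1) / ris y (n + 1) = ris (x + 1) n / ris (y + 1) n * (x / y) := by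
  rw [ris_succ_left, ris_succ_left, mul_div_mul_comm, mul_comm]

lemma div_mul_div_swap (w x y z : ℝ) : w / x * (y / z) = w / z * (y / x) := by
  rw [div_mul_div_comm, div_mul_div_comm, mul_comm x]

lemma mul_ris_div_factorial_succ (a : ℝ) (m : ℕ) :
    (a + 2 * (m + 1 : ℕ)) * ris a (m + 1) / (m + 1).factorial =
      ris a (m + 1) / m.factorial * ((a + 2 * (m + 1)) / (m + 1)) := by
  rw [Nat.factorial_succ, mul_comm (m + 1)]
  push_cast
  rw [mul_comm, mul_div_mul_comm]

/-- The antidifference in the Wilf–Zeilberger proof of Dougall's terminating ₇F₆ sum. -/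
noncomputable def dougallFlux (a b c d n : ℝ) (m : ℕ) : ℝ :=
  ris a (m + 1) / m.factorial * (ris b (m + 1) / ris (1 + a - b) m) *
    (ris c (m + 1) / ris (1 + a - c) m) * (ris d (m + 1) / ris (1 + a - d) m) *
    (ris (2 + 2 * a - b - c - d + n) m / ris (2 + a + n) m) *
    (ris (-n) m / ris (b + c + d - a - n) m)

section Ratios

variable (a b c d n : ℝ) (m : ℕ)

lemma dougallFlux_succ :
    dougallFlux a b c d n (m + 1) =
      dougallFlux a b c d n m * ((a + (m + 1)) / (m + 1) * ((b + (m + 1)) / (1 + a - b + m)) *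
        ((c + (m + 1)) / (1 + a - c + m)) * ((d + (m + 1)) / (1 + a - d + m)) *
        ((2 + 2 * a - b - c - d + n + m) / (2 + a + n + m)) *
        ((-n + m) / (b + c + d - a - n + m))) := by
  have hstep (x y : ℝ) : ris x (m + 2) / ris y (m + 1) =
      ris x (m + 1) / ris y m * ((x + (m + 1)) / (y + m)) := by
    rw [ris_succ_div_ris_succ, Nat.cast_succ]
  have hone : (1 : ℝ) + m = m + 1 := add_comm _ _
  simp only [dougallFlux, ← ris_one]
  rw [hstep, hstep, hstep, hstep, ris_succ_div_ris_succ, ris_succ_div_ris_succ, hone]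
  ac_rfl

lemma wellPoised_succ_left :
    wellPoised a [b, c, d, 1 + 2 * a - b - c - d + (n + 1), -(n + 1)] (m + 1) =
      dougallFlux a b c d n m * ((a + 2 * (m + 1)) / (m + 1) * (1 / (1 + a - b + m)) *
        (1 / (1 + a - c + m)) * (1 / (1 + a - d + m)) *
        ((2 + 2 * a - b - c - d + n + m) / (2 + a + n + m)) *
        ((n + 1) / (1 + a - b - c - d + n))) := by
  have hlower : 1 + a - (1 + 2 * a - b - c - d + (n + 1)) = -(1 + a - b - c - d + n) := by ring
  have hlower' : -(1 + a - b - c - d + n) + 1 = b + c + d - a - n := by ring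
  have hneg : -(n + 1) / -(1 + a - b - c - d + n) = (n + 1) / (1 + a - b - c - d + n) :=
    neg_div_neg_eq _ _
  have hone : 1 + a - -(n + 1) = 2 + a + n := by ring
  have hupper : 1 + 2 * a - b - c - d + (n + 1) = 2 + 2 * a - b - c - d + n := by ring
  simp only [wellPoised, List.map_cons, List.map_nil, List.prod_cons, List.prod_nil, dougallFlux]
  rw [hlower, hone, hupper, mul_one, mul_ris_div_factorial_succ, div_mul_div_swap (ris (_ + n) _),
    ris_succ_div_ris_succ _ (2 + a + n), ris_succ_div_ris_succ_left (-(n + 1)), hlower',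
    show -(n + 1) + 1 = -n by ring, hneg,
    ris_div_ris_succ b, ris_div_ris_succ c, ris_div_ris_succ d]
  ac_rfl

lemma wellPoised_succ_right :
    wellPoised a [b, c, d, 1 + 2 * a - b - c - d + n, -n] (m + 1) =
      dougallFlux a b c d n m * ((a + 2 * (m + 1)) / (m + 1) * (1 / (1 + a - b + m)) *
        (1 / (1 + a - c + m)) * (1 / (1 + a - d + m)) *
        ((1 + 2 * a - b - c - d + n) / (1 + a + n)) *
        ((-n + m) / (b + c + d - a - n + m))) := by
  have hlower : 1 + a - (1 + 2 * a - b - c - d + n) = b + c + d - a - n := by ring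
  have hone : 1 + a - -n = 1 + a + n := by ring
  have hone' : 1 + a + n + 1 = 2 + a + n := by ring
  have hupper : 1 + 2 * a - b - c - d + n + 1 = 2 + 2 * a - b - c - d + n := by ring
  simp only [wellPoised, List.map_cons, List.map_nil, List.prod_cons, List.prod_nil, dougallFlux]
  rw [hlower, hone, mul_one, mul_ris_div_factorial_succ, div_mul_div_swap (ris (_ + n) _),
    ris_succ_div_ris_succ (-n), ris_succ_div_ris_succ_left _ (1 + a + n), hone', hupper]
  rw [ris_div_ris_succ b, ris_div_ris_succ c, ris_div_ris_succ d]
  ac_rfl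

end Ratios

lemma dougall_certificate {a b c d n x : ℝ} (hx : x + 1 ≠ 0) (hb : 1 + a - b + x ≠ 0)
    (hc : 1 + a - c + x ≠ 0) (hd : 1 + a - d + x ≠ 0) (hδ : 1 + a - b - c - d + n ≠ 0)
    (ha : 1 + a + n ≠ 0) (h₁ : 2 + a + n + x ≠ 0) (h₂ : x ≠ n → b + c + d - a - n + x ≠ 0) :
    (1 + a - b + n) * (1 + a - c + n) * (1 + a - d + n) * (1 + a - b - c - d + n) *
        ((a + 2 * (x + 1)) / (x + 1) * (1 / (1 + a - b + x)) * (1 / (1 + a - c + x)) *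
          (1 / (1 + a - d + x)) * ((2 + 2 * a - b - c - d + n + x) / (2 + a + n + x)) *
          ((n + 1) / (1 + a - b - c - d + n))) -
      (1 + a + n) * (1 + a - b - c + n) * (1 + a - b - d + n) * (1 + a - c - d + n) *
        ((a + 2 * (x + 1)) / (x + 1) * (1 / (1 + a - b + x)) * (1 / (1 + a - c + x)) *
          (1 / (1 + a - d + x)) * ((1 + 2 * a - b - c - d + n) / (1 + a + n)) *
          ((-n + x) / (b + c + d - a - n + x))) =
      (2 + 2 * a - b - c - d + 2 * n) *
        (1 - (a + (x + 1)) / (x + 1) * ((b + (x + 1)) / (1 + a - b + x)) *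
          ((c + (x + 1)) / (1 + a - c + x)) * ((d + (x + 1)) / (1 + a - d + x)) *
          ((2 + 2 * a - b - c - d + n + x) / (2 + a + n + x)) *
          ((-n + x) / (b + c + d - a - n + x))) := by
  -- At `x = n` the denominator `b + c + d - a - n + x` may vanish, but its numerator does too.
  rcases eq_or_ne x n with rfl | hxn
  · simp only [neg_add_cancel, zero_div, mul_zero, sub_zero, mul_one]
    field_simp
    ring
  · have := h₂ hxn
    field_simp
    ring

section Sum

variable {a b c d : ℝ} (ha : -1 < a) (hb : 0 < 1 + a - b) (hc : 0 < 1 + a - c)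
  (hd : 0 < 1 + a - d) (hδ : 0 < 1 + a - b - c - d)
include ha hb hc hd hδ

lemma dougall_telescope (n m : ℕ) (hmn : m ≤ n) :
    (1 + a - b + n) * (1 + a - c + n) * (1 + a - d + n) * (1 + a - b - c - d + n) *
        wellPoised a [b, c, d, 1 + 2 * a - b - c - d + (n + 1), -(n + 1)] (m + 1) -
      (1 + a + n) * (1 + a - b - c + n) * (1 + a - b - d + n) * (1 + a - c - d + n) *
        wellPoised a [b, c, d, 1 + 2 * a - b - c - d + n, -n] (m + 1) =
      (2 + 2 * a - b - c - d + 2 * n) *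
        (dougallFlux a b c d n m - dougallFlux a b c d n (m + 1)) := by
  have hlower (h : (m : ℝ) ≠ n) : b + c + d - a - n + m ≠ 0 := by
    have : (m : ℝ) + 1 ≤ n := by exact_mod_cast lt_of_le_of_ne hmn (by exact_mod_cast h)
    linarith
  have ha₁ : 0 < 1 + a := by linarith
  have ha₂ : 0 < 2 + a := by linarith
  rw [dougallFlux_succ, wellPoised_succ_left, wellPoised_succ_right, mul_left_comm,
    mul_left_comm _ (dougallFlux _ _ _ _ _ _), ← mul_sub, dougall_certificate (by positivity)
    (by positivity) (by positivity) (by positivity) (by positivity) (by positivity)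
    (by positivity) hlower, mul_left_comm, mul_one_sub]

lemma sum_wellPoised_dougall_succ (n : ℕ) :
    (1 + a - b + n) * (1 + a - c + n) * (1 + a - d + n) * (1 + a - b - c - d + n) *
        ∑ j ∈ Finset.range (n + 2),
          wellPoised a [b, c, d, 1 + 2 * a - b - c - d + (n + 1), -(n + 1)] j =
      (1 + a + n) * (1 + a - b - c + n) * (1 + a - b - d + n) * (1 + a - c - d + n) *
        ∑ j ∈ Finset.range (n + 1), wellPoised a [b, c, d, 1 + 2 * a - b - c - d + n, -n] j := by
  have hflux : dougallFlux a b c d n (n + 1) = 0 := by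
    simp [dougallFlux, ris_neg_natCast_eq_zero]
  have hflux₀ : dougallFlux a b c d n 0 = a * b * c * d := by simp [dougallFlux, ris]
  have hlast : wellPoised a [b, c, d, 1 + 2 * a - b - c - d + n, -n] (n + 1) = 0 := by
    simp [wellPoised, ris_neg_natCast_eq_zero]
  have hzero (s : List ℝ) : wellPoised a s 0 = a := by simp [wellPoised]
  rw [← add_zero (∑ j ∈ Finset.range (n + 1), _), ← hlast, ← Finset.sum_range_succ, ← sub_eq_zero,
    Finset.mul_sum, Finset.mul_sum, ← Finset.sum_sub_distrib, Finset.sum_range_succ',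
    Finset.sum_congr rfl fun m hm => dougall_telescope ha hb hc hd hδ n m
      (Nat.lt_succ_iff.mp (Finset.mem_range.mp hm)),
    ← Finset.mul_sum, Finset.sum_range_sub', hflux, hflux₀, hzero, hzero]
  ring

theorem sum_wellPoised_dougall (n : ℕ) :
    ∑ j ∈ Finset.range (n + 1), wellPoised a [b, c, d, 1 + 2 * a - b - c - d + n, -n] j =
      a * (ris (1 + a) n * ris (1 + a - b - c) n * ris (1 + a - b - d) n *
          ris (1 + a - c - d) n) /
        (ris (1 + a - b) n * ris (1 + a - c) n * ris (1 + a - d) n *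
          ris (1 + a - b - c - d) n) := by
  induction n with
  | zero => simp [wellPoised]
  | succ n ih =>
    have hpos : 0 < (1 + a - b + n) * (1 + a - c + n) * (1 + a - d + n) *
      (1 + a - b - c - d + n) := by positivity
    have := ris_pos hb n
    have := ris_pos hc n
    have := ris_pos hd n
    have := ris_pos hδ n
    push_cast
    rw [← mul_right_inj' hpos.ne', sum_wellPoised_dougall_succ ha hb hc hd hδ, ih]
    simp only [ris_succ]
    field_simp

end Sum

end TerminatingDougall

lemma tendsto_ris_div_ris_atTop (x y : ℝ) {r s : ℝ} (hs : s ≠ 0) (n : ℕ) :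
    Tendsto (fun t => ris (x + r * t) n / ris (y + s * t) n) atTop (𝓝 ((r / s) ^ n)) := by
  have hlinear (z q : ℝ) (k : ℕ) : Tendsto (fun t : ℝ => (z + k) / t + q) atTop (𝓝 q) := by
    simpa using (tendsto_const_nhds.div_atTop tendsto_id).add_const q
  have hfactor (k : ℕ) :
      Tendsto (fun t => (x + r * t + k) / (y + s * t + k)) atTop (𝓝 (r / s)) := by
    refine ((hlinear x r k).div (hlinear y s k) hs).congr' ?_
    filter_upwards [eventually_gt_atTop 0] with t ht
    simp only [Pi.div_apply]
    rw [← mul_div_mul_right _ _ ht.ne', add_mul, add_mul, div_mul_cancel₀ _ ht.ne',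
      div_mul_cancel₀ _ ht.ne', add_right_comm, add_right_comm y]
  simpa only [ris, ← Finset.prod_div_distrib, Finset.prod_const, Finset.card_range] using
    tendsto_finsetProd (Finset.range n) fun k _ => hfactor k

lemma tendsto_wellPoised_dougall (a b c : ℝ) (n j : ℕ) :
    Tendsto (fun t : ℝ => wellPoised a [b, c, -t, 1 + 2 * a - b - c - -t + n, -n] j) atTop
      (𝓝 (wellPoised a [b, c, -n] j)) := by
  have hd := tendsto_ris_div_ris_atTop 0 (1 + a) (r := -1) one_ne_zero j
  have he := tendsto_ris_div_ris_atTop (1 + 2 * a - b - c + n) (b + c - a - n) (r := 1)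
    (neg_ne_zero.mpr one_ne_zero) j
  have hsign : ((-1 : ℝ) / 1) ^ j * (1 / -1) ^ j = 1 := by rw [← mul_pow]; norm_num
  convert ((hd.mul he).const_mul (wellPoised a [b, c, -n] j)) using 1
  · funext t
    simp only [wellPoised, List.map_cons, List.map_nil, List.prod_cons, List.prod_nil]
    ring_nf
  · rw [hsign, mul_one]

-- The limit `d → -∞` of `sum_wellPoised_dougall`.
theorem sum_wellPoised_dougall_three {a b c : ℝ} (ha : -1 < a) (hb : 0 < 1 + a - b)
    (hc : 0 < 1 + a - c) (n : ℕ) :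
    ∑ j ∈ Finset.range (n + 1), wellPoised a [b, c, -n] j =
      a * (ris (1 + a) n * ris (1 + a - b - c) n) / (ris (1 + a - b) n * ris (1 + a - c) n) := by
  have hleft := tendsto_finsetSum (Finset.range (n + 1)) fun j _ =>
    tendsto_wellPoised_dougall a b c n j
  have hratio (x y : ℝ) : Tendsto (fun t => ris (x + t) n / ris (y + t) n) atTop (𝓝 1) := by
    simpa using tendsto_ris_div_ris_atTop x y (r := 1) one_ne_zero n
  have hright := ((hratio (1 + a - b) (1 + a)).mul
    (hratio (1 + a - c) (1 + a - b - c))).const_mul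
    (a * (ris (1 + a) n * ris (1 + a - b - c) n) / (ris (1 + a - b) n * ris (1 + a - c) n))
  rw [mul_one, mul_one] at hright
  refine tendsto_nhds_unique hleft (hright.congr' ?_)
  filter_upwards [eventually_gt_atTop 0, eventually_gt_atTop (b + c - 1 - a)] with t ht₀ ht₁
  rw [sum_wellPoised_dougall ha hb hc (by linarith) (by linarith)]
  simp only [sub_neg_eq_add, div_eq_mul_inv, mul_inv]
  ring

section NonnegDoubleSeries

variable {ι κ : Type*} {f : ι → κ → ℝ} {r : ι → ℝ} {c : κ → ℝ} {S : ℝ}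

lemma hasSum_uncurry_of_nonneg (hf : ∀ i j, 0 ≤ f i j) (hr : ∀ i, HasSum (f i) (r i))
    (hS : HasSum r S) : HasSum (Function.uncurry f) S := by
  have hsummable : Summable (Function.uncurry f) := by
    refine (summable_prod_of_nonneg fun q => hf q.1 q.2).mpr ⟨fun i => (hr i).summable, ?_⟩
    simpa only [Function.uncurry_apply_pair, (hr _).tsum_eq] using hS.summable
  rw [← (hsummable.hasSum.prod_fiberwise hr).unique hS]
  exact hsummable.hasSum

lemma hasSum_swap_of_nonneg (hf : ∀ i j, 0 ≤ f i j) (hr : ∀ i, HasSum (f i) (r i))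
    (hc : ∀ j, HasSum (fun i => f i j) (c j)) (hS : HasSum r S) : HasSum c S :=
  ((Equiv.prodComm κ ι).hasSum_iff.mpr (hasSum_uncurry_of_nonneg hf hr hS)).prod_fiberwise hc

lemma hasSum_rows_iff_hasSum_columns_of_nonneg (hf : ∀ i j, 0 ≤ f i j)
    (hr : ∀ i, HasSum (f i) (r i)) (hc : ∀ j, HasSum (fun i => f i j) (c j)) :
    HasSum r S ↔ HasSum c S :=
  ⟨hasSum_swap_of_nonneg hf hr hc, hasSum_swap_of_nonneg (fun j i => hf i j) hc hr⟩

end NonnegDoubleSeries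

lemma wellPoised_cons (a b : ℝ) (s : List ℝ) (n : ℕ) :
    wellPoised a (b :: s) n = ris b n / ris (1 + a - b) n * wellPoised a s n := by
  simp only [wellPoised, List.map_cons, List.prod_cons]
  ring

lemma wellPoised_perm {a : ℝ} {s t : List ℝ} (h : s.Perm t) : wellPoised a s = wellPoised a t := by
  funext n
  rw [wellPoised, wellPoised, (h.map _).prod_eq]

lemma wellPoised_nonneg {a : ℝ} {s : List ℝ} (ha : 0 < a) (hs : ∀ b ∈ s, 0 < b ∧ b < 1 + a)
    (n : ℕ) : 0 ≤ wellPoised a s n := by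
  refine mul_nonneg (by have := ris_pos ha n; positivity) (List.prod_nonneg fun x hx => ?_)
  obtain ⟨b, hb, rfl⟩ := List.mem_map.mp hx
  exact div_nonneg (ris_pos (hs b hb).1 n).le (ris_pos (by linarith [(hs b hb).2]) n).le

section Parseval

/-- Up to normalization, the moment `∫ xⁱ Pₘ(x) x ^ (p - 1) * (1 - x) ^ (a - p) dx` over `(0, 1)`
of the degree-`m` Jacobi polynomial orthogonal for this weight. The normalization is chosen so
that the moments no longer depend on `p`. -/
noncomputable def jacobiMoment (a : ℝ) (i m : ℕ) : ℝ := i.descFactorial m / ris (1 + a) (i + m)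

lemma jacobiMoment_nonneg {a : ℝ} (ha : -1 < a) (i m : ℕ) : 0 ≤ jacobiMoment a i m :=
  div_nonneg (Nat.cast_nonneg _) (ris_pos (by linarith) _).le

lemma ris_neg_natCast_div_eq_jacobiMoment {a : ℝ} (ha : -1 < a) (i m : ℕ) :
    ris (-i) m / ris (1 + a - -i) m = (-1) ^ m * (ris (1 + a) i * jacobiMoment a i m) := by
  have := ris_pos (neg_lt_iff_pos_add'.mp ha) i
  rw [jacobiMoment, ris_add, ris_neg_natCast, sub_neg_eq_add]
  field_simp

/-- The value of `∑' m, wellPoised a [1 + a - p] m * jacobiMoment a i m * jacobiMoment a k m`,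
proportional to the moment of `x ^ (i + k)` for the weight `x ^ (p - 1) * (1 - x) ^ (a - p)`. -/
noncomputable def jacobiGram (a p : ℝ) (i k : ℕ) : ℝ :=
  a * ris p (i + k) / (ris p i * ris p k * ris (1 + a) (i + k))

variable {a p : ℝ}

lemma hasSum_jacobiGram (ha : -1 < a) (hp : 0 < p) (i k : ℕ) :
    HasSum (fun m => wellPoised a [1 + a - p] m * (jacobiMoment a i m * jacobiMoment a k m))
      (jacobiGram a p i k) := by
  have ha' : 0 < 1 + a := by linarith
  have hi := ris_pos ha' i
  have hk := ris_pos ha' k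
  have hterm (m : ℕ) : wellPoised a [1 + a - p, -i, -k] m = ris (1 + a) i * ris (1 + a) k *
      (wellPoised a [1 + a - p] m * (jacobiMoment a i m * jacobiMoment a k m)) := by
    rw [wellPoised_cons, wellPoised_cons, wellPoised_cons, wellPoised_cons,
      ris_neg_natCast_div_eq_jacobiMoment ha, ris_neg_natCast_div_eq_jacobiMoment ha]
    have hsign : ((-1 : ℝ) ^ m) * (-1) ^ m = 1 := by rw [← mul_pow]; norm_num
    linear_combination (ris (1 + a - p) m / ris (1 + a - (1 + a - p)) m * wellPoised a [] m *
      ris (1 + a) i * ris (1 + a) k * jacobiMoment a i m * jacobiMoment a k m) * hsign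
  have hsum := sum_wellPoised_dougall_three (b := 1 + a - p) (c := -i) ha (by linarith)
    (by rw [sub_neg_eq_add]; positivity) k
  simp only [hterm, ← Finset.mul_sum] at hsum
  have hvanish (m : ℕ) (hm : m ∉ Finset.range (k + 1)) :
      wellPoised a [1 + a - p] m * (jacobiMoment a i m * jacobiMoment a k m) = 0 := by
    simp [jacobiMoment, Nat.descFactorial_of_lt (n := k) (by simpa using hm)]
  have hvalue : ris (1 + a) i * ris (1 + a) k * jacobiGram a p i k =
      a * (ris (1 + a) k * ris (p + i) k) / (ris p k * ris (1 + a + i) k) := by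
    have := ris_pos hp i
    have := ris_pos hp k
    have : 0 < ris (1 + a + i) k := ris_pos (by positivity) k
    rw [jacobiGram, ris_add p, ris_add (1 + a)]
    field_simp
  rw [show 1 + a - (1 + a - p) - -(i : ℝ) = p + i by ring, show 1 + a - (1 + a - p) = p by ring,
    sub_neg_eq_add, ← hvalue, mul_right_inj' (mul_pos hi hk).ne'] at hsum
  exact hsum ▸ hasSum_sum_of_ne_finset_zero hvanish

theorem hasSum_jacobiGram_iff (ha : 0 < a) (hp : 0 < p) (hpa : p < 1 + a) {u v U V : ℕ → ℝ} {S : ℝ}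
    (hu : ∀ i, 0 ≤ u i) (hv : ∀ k, 0 ≤ v k)
    (hU : ∀ m, HasSum (fun i => u i * jacobiMoment a i m) (U m))
    (hV : ∀ m, HasSum (fun k => v k * jacobiMoment a k m) (V m)) :
    HasSum (fun q : ℕ × ℕ => u q.1 * v q.2 * jacobiGram a p q.1 q.2) S ↔
      HasSum (fun m => wellPoised a [1 + a - p] m * (U m * V m)) S := by
  have hw := wellPoised_nonneg (s := [1 + a - p]) ha (by simp [hp, hpa])
  have hmoment := jacobiMoment_nonneg (by linarith : -1 < a)
  have hrow (q : ℕ × ℕ) : HasSum (fun m => u q.1 * v q.2 * (wellPoised a [1 + a - p] m *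
      (jacobiMoment a q.1 m * jacobiMoment a q.2 m))) (u q.1 * v q.2 * jacobiGram a p q.1 q.2) :=
    (hasSum_jacobiGram (by linarith) hp q.1 q.2).mul_left _
  have hcolumn (m : ℕ) : HasSum (fun q : ℕ × ℕ => u q.1 * v q.2 * (wellPoised a [1 + a - p] m *
      (jacobiMoment a q.1 m * jacobiMoment a q.2 m)))
      (wellPoised a [1 + a - p] m * (U m * V m)) := by
    have hprod := (hU m).mul (hV m) ((hU m).summable.mul_of_nonneg (hV m).summable
      (fun i => mul_nonneg (hu i) (hmoment i m)) fun k => mul_nonneg (hv k) (hmoment k m))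
    refine (hprod.mul_left (wellPoised a [1 + a - p] m)).congr_fun fun q => ?_
    ring
  exact hasSum_rows_iff_hasSum_columns_of_nonneg (fun q m => mul_nonneg (mul_nonneg (hu _) (hv _))
    (mul_nonneg (hw m) (mul_nonneg (hmoment _ _) (hmoment _ _)))) hrow hcolumn

end Parseval

section Gauss

lemma ofReal_betaIntegrand {u v x : ℝ} (hx : x ∈ Ioo (0 : ℝ) 1) :
    (x : ℂ) ^ ((u : ℂ) - 1) * (1 - (x : ℂ)) ^ ((v : ℂ) - 1) =
      ((x ^ (u - 1) * (1 - x) ^ (v - 1) : ℝ) : ℂ) := by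
  rw [Complex.ofReal_mul, Complex.ofReal_cpow hx.1.le, Complex.ofReal_cpow (sub_pos.mpr hx.2).le]
  norm_cast

lemma integrableOn_betaIntegrand {u v : ℝ} (hu : 0 < u) (hv : 0 < v) :
    IntegrableOn (fun x : ℝ => x ^ (u - 1) * (1 - x) ^ (v - 1)) (Ioo 0 1) := by
  have hconv := Complex.betaIntegral_convergent (u := u) (v := v) (by simpa) (by simpa)
  rw [intervalIntegrable_iff_integrableOn_Ioo_of_le zero_le_one] at hconv
  simpa using!
    (hconv.congr_fun (fun x hx => ofReal_betaIntegrand hx) measurableSet_Ioo).re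

lemma integral_betaIntegrand {u v : ℝ} (hu : 0 < u) (hv : 0 < v) :
    ∫ x in Ioo (0 : ℝ) 1, x ^ (u - 1) * (1 - x) ^ (v - 1) = beta u v := by
  rw [beta_eq_betaIntegralReal u v hu hv, Complex.betaIntegral,
    intervalIntegral.integral_of_le zero_le_one, integral_Ioc_eq_integral_Ioo,
    setIntegral_congr_fun measurableSet_Ioo fun x hx => ofReal_betaIntegrand hx,
    integral_complex_ofReal, Complex.ofReal_re]

lemma beta_add_natCast_left {u v : ℝ} (hu : 0 < u) (hv : 0 < v) (n : ℕ) :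
    beta (u + n) v = ris u n / ris (u + v) n * beta u v := by
  rw [beta, beta, add_right_comm, Gamma_add_natCast_eq_ris_mul hu,
    Gamma_add_natCast_eq_ris_mul (add_pos hu hv), mul_assoc, mul_div_mul_comm]

lemma hasSum_ris_mul_pow (a : ℝ) {x : ℝ} (hx : |x| < 1) :
    HasSum (fun n : ℕ => ris a n / n.factorial * x ^ n) ((1 - x) ^ (-a)) := by
  have hseries := (Real.one_div_one_sub_rpow_hasFPowerSeriesOnBall_zero a).hasSum (y := x)
    (by simpa [Metric.mem_eball, edist_dist] using hx)
  have hcoeff (n : ℕ) : Ring.choose (a + n - 1) n = ris a n / n.factorial := by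
    rw [Ring.choose, show a + n - 1 - n + 1 = a by ring, ris_eq_ascPochhammer_eval,
      ← Polynomial.ascPochhammer_smeval_eq_eval,
      ← Ring.factorial_nsmul_multichoose_eq_ascPochhammer, nsmul_eq_mul,
      mul_div_cancel_left₀ _ (by positivity)]
  rw [zero_add, one_div, ← Real.rpow_neg (by linarith [(abs_lt.mp hx).2])] at hseries
  simpa only [FormalMultilinearSeries.ofScalars_apply_eq, smul_eq_mul, hcoeff] using hseries

/-- The value `Γ(c) Γ(c - a - b) / (Γ(c - a) Γ(c - b))` of `₂F₁(a, b; c | 1)`. -/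
noncomputable def gaussValue (a b c : ℝ) : ℝ :=
  Gamma c * Gamma (c - a - b) / (Gamma (c - a) * Gamma (c - b))

lemma gaussValue_pos {a b c : ℝ} (ha : 0 < a) (hb : 0 < b) (h : a + b < c) :
    0 < gaussValue a b c :=
  div_pos (mul_pos (Gamma_pos_of_pos (by linarith)) (Gamma_pos_of_pos (by linarith)))
    (mul_pos (Gamma_pos_of_pos (by linarith)) (Gamma_pos_of_pos (by linarith)))

lemma hasSum_betaIntegrand (a b c : ℝ) {x : ℝ} (hx : x ∈ Ioo (0 : ℝ) 1) :
    HasSum (fun n : ℕ => ris a n / n.factorial * (x ^ (b + n - 1) * (1 - x) ^ (c - b - 1)))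
      (x ^ (b - 1) * (1 - x) ^ (c - a - b - 1)) := by
  have hx' : 0 < 1 - x := sub_pos.mpr hx.2
  have hpow (n : ℕ) : x ^ (b + n - 1) = x ^ (b - 1) * x ^ n := by
    rw [add_sub_right_comm, Real.rpow_add_natCast hx.1.ne']
  have hpow' : (1 - x) ^ (c - a - b - 1) = (1 - x) ^ (c - b - 1) * (1 - x) ^ (-a) := by
    rw [← Real.rpow_add hx']
    ring_nf
  rw [hpow', ← mul_assoc]
  refine ((hasSum_ris_mul_pow a (abs_lt.mpr ⟨by linarith [hx.1], hx.2⟩)).mul_left _).congr_fun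
    fun n => ?_
  rw [hpow]
  ring

theorem hasSum_gaussValue {a b c : ℝ} (ha : 0 < a) (hb : 0 < b) (h : a + b < c) :
    HasSum (fun n : ℕ => ris a n * ris b n / (n.factorial * ris c n)) (gaussValue a b c) := by
  have hcb : 0 < c - b := by linarith
  have hcab : 0 < c - a - b := by linarith
  have hbn (n : ℕ) : 0 < b + n := by positivity
  have hintegral := hasSum_integral_of_dominated_convergence (μ := volume.restrict (Ioo 0 1))
    (fun n x => ris a n / n.factorial * (x ^ (b + n - 1) * (1 - x) ^ (c - b - 1)))
    (fun n => ((integrableOn_betaIntegrand (hbn n) hcb).const_mul _).aestronglyMeasurable)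
    (fun n => ae_restrict_of_forall_mem measurableSet_Ioo fun x hx => (Real.norm_of_nonneg <| by
      have := ris_pos ha n
      have := hx.1
      have := sub_pos.mpr hx.2
      positivity).le)
    (ae_restrict_of_forall_mem measurableSet_Ioo fun x hx =>
      (hasSum_betaIntegrand a b c hx).summable)
    ((integrableOn_betaIntegrand hb hcab).congr_fun (fun x hx =>
      (hasSum_betaIntegrand a b c hx).tsum_eq.symm) measurableSet_Ioo)
    (ae_restrict_of_forall_mem measurableSet_Ioo fun x hx => hasSum_betaIntegrand a b c hx)
  have hbeta := beta_pos hb hcb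
  have hvalue : gaussValue a b c = beta b (c - a - b) / beta b (c - b) := by
    have := Gamma_pos_of_pos hb
    have := Gamma_pos_of_pos hcb
    rw [gaussValue, beta, beta, show b + (c - a - b) = c - a by ring, add_sub_cancel]
    field_simp
  rw [integral_betaIntegrand hb hcab] at hintegral
  rw [hvalue]
  refine (hintegral.div_const _).congr_fun fun n => ?_
  rw [integral_const_mul, integral_betaIntegrand (hbn n) hcb, beta_add_natCast_left hb hcb,
    add_sub_cancel]
  field_simp

lemma gaussValue_add_natCast {a b c : ℝ} (ha : 0 < a) (hb : 0 < b) (h : a + b < c) (m n : ℕ) :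
    gaussValue (a + m) (b + n) (c + (m + n : ℕ)) =
      gaussValue a b c * (ris c (m + n) / (ris (c - a) n * ris (c - b) m)) := by
  rw [gaussValue, gaussValue, Gamma_add_natCast_eq_ris_mul (by linarith)]
  push_cast
  rw [show c + (m + n) - (a + m) - (b + n) = c - a - b by ring,
    show c + (m + n) - (a + m) = c - a + n by ring,
    show c + (m + n) - (b + n) = c - b + m by ring,
    Gamma_add_natCast_eq_ris_mul (by linarith), Gamma_add_natCast_eq_ris_mul (by linarith)]
  simp only [div_eq_mul_inv, mul_inv]
  ring

end Gauss

section Dougall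

variable {a b c d : ℝ}

lemma hasSum_mul_jacobiMoment (hb : 0 < b) (hc : 0 < c) (h : b + c < 1 + a) (m : ℕ) :
    HasSum (fun i => ris b i * ris c i / i.factorial * jacobiMoment a i m)
      (gaussValue b c (1 + a) *
        (ris b m / ris (1 + a - b) m * (ris c m / ris (1 + a - c) m))) := by
  have ha : 0 < 1 + a := by linarith
  have hvanish : ∑ i ∈ Finset.range m,
      ris b i * ris c i / i.factorial * jacobiMoment a i m = 0 :=
    Finset.sum_eq_zero fun i hi => by
      simp [jacobiMoment, Nat.descFactorial_of_lt (Finset.mem_range.mp hi)]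
  have hshift := (hasSum_gaussValue (a := b + m) (b := c + m) (c := 1 + a + (m + m : ℕ))
    (by positivity) (by positivity) (by push_cast; linarith)).mul_left
    (ris b m * ris c m / ris (1 + a) (m + m))
  rw [gaussValue_add_natCast hb hc h] at hshift
  rw [← hasSum_nat_add_iff' m, hvanish, sub_zero]
  have hvalue : ris b m * ris c m / ris (1 + a) (m + m) * (gaussValue b c (1 + a) *
      (ris (1 + a) (m + m) / (ris (1 + a - b) m * ris (1 + a - c) m))) =
      gaussValue b c (1 + a) * (ris b m / ris (1 + a - b) m * (ris c m / ris (1 + a - c) m)) := by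
    have := ris_pos ha (m + m)
    field_simp
  refine (hvalue ▸ hshift).congr_fun fun i => ?_
  have hfactorial : ((i + m).factorial : ℝ) = i.factorial * (i + m).descFactorial m := by
    rw [← Nat.factorial_mul_descFactorial (Nat.le_add_left m i), Nat.add_sub_cancel, Nat.cast_mul]
  have : ((i + m).descFactorial m : ℝ) ≠ 0 := by
    exact_mod_cast (Nat.descFactorial_pos.mpr (Nat.le_add_left m i)).ne'
  rw [jacobiMoment, hfactorial, add_right_comm i, add_comm (i + m) m, ← add_assoc, add_comm i m,
    ris_add b, ris_add c, add_right_comm m i m, ris_add (1 + a)]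
  field_simp

lemma hasSum_mul_jacobiGram (hb : 0 < b) (hc : 0 < c) (hd : 0 < d) (ha : 0 < a)
    (h : b + c + d < 1 + a) :
    HasSum (fun q : ℕ × ℕ => ris d q.1 * ris c q.1 / q.1.factorial *
        (ris b q.2 * ris c q.2 / q.2.factorial) * jacobiGram a c q.1 q.2)
      (a * gaussValue b c (1 + a) * gaussValue d c (1 + a - b)) := by
  have ha' : 0 < 1 + a := by linarith
  have hcpos := ris_pos hc
  have hapos := ris_pos ha'
  refine hasSum_uncurry_of_nonneg (f := fun k i => ris d k * ris c k / k.factorial *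
    (ris b i * ris c i / i.factorial) * jacobiGram a c k i) (fun k i => ?_) (fun k => ?_)
    ((hasSum_gaussValue hd hc (by linarith)).mul_left (a * gaussValue b c (1 + a)))
  · have := ris_pos hb i
    have := ris_pos hd k
    have := hcpos i
    have := hcpos k
    have := hcpos (k + i)
    have := hapos (k + i)
    rw [jacobiGram]
    positivity
  · have hinner := hasSum_gaussValue (a := b) (b := c + k) (c := 1 + a + k) hb (by positivity)
      (by linarith)
    have hgauss := gaussValue_add_natCast hb hc (by linarith : b + c < 1 + a) 0 k
    simp only [Nat.cast_zero, add_zero, zero_add, ris_zero, mul_one] at hgauss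
    rw [hgauss] at hinner
    have := hapos k
    have hvalue : a * gaussValue b c (1 + a) * (ris d k * ris c k / (k.factorial *
        ris (1 + a - b) k)) = a * ris d k * ris c k / (k.factorial * ris (1 + a) k) *
        (gaussValue b c (1 + a) * (ris (1 + a) k / ris (1 + a - b) k)) := by
      field_simp
    rw [hvalue]
    refine (hinner.mul_left _).congr_fun fun i => ?_
    have := hcpos k
    have := hcpos i
    rw [jacobiGram, ris_add c, ris_add (1 + a)]
    field_simp

theorem hasSum_wellPoised_dougall (ha : 0 < a) (hb : 0 < b) (hc : 0 < c) (hd : 0 < d)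
    (h : b + c + d < 1 + a) :
    HasSum (wellPoised a [b, c, d])
      (a * gaussValue d c (1 + a - b) / gaussValue d c (1 + a)) := by
  have hpos {x : ℝ} (hx : 0 < x) (i : ℕ) : 0 ≤ ris x i * ris c i / i.factorial :=
    div_nonneg (mul_nonneg (ris_pos hx i).le (ris_pos hc i).le) (Nat.cast_nonneg _)
  have hsum := (hasSum_jacobiGram_iff ha hc (by linarith) (hpos hd) (hpos hb)
    (hasSum_mul_jacobiMoment hd hc (by linarith))
    (hasSum_mul_jacobiMoment hb hc (by linarith))).mp (hasSum_mul_jacobiGram hb hc hd ha h)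
  have hgb := gaussValue_pos hb hc (by linarith : b + c < 1 + a)
  have hgd := gaussValue_pos hd hc (by linarith : d + c < 1 + a)
  have hvalue : a * gaussValue d c (1 + a - b) / gaussValue d c (1 + a) =
      (a * gaussValue b c (1 + a) * gaussValue d c (1 + a - b)) /
        (gaussValue b c (1 + a) * gaussValue d c (1 + a)) := by
    field_simp
  rw [hvalue]
  refine (hsum.div_const _).congr_fun fun m => ?_
  have := ris_pos hc m
  have : 0 < ris (1 + a - c) m := ris_pos (by linarith) m
  simp only [wellPoised_cons, sub_sub_cancel]
  field_simp

end Dougall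

section Bailey

lemma ris_mul_ris_add_natCast (x : ℝ) (m j : ℕ) :
    ris x (m + j) * ris (x + (m + j : ℕ)) j = ris x (j + j) * ris (x + (j + j : ℕ)) m := by
  rw [← ris_add, ← ris_add, add_assoc, add_comm m]

lemma ris_div_factorial_mul_reflection {x : ℝ} (hx : 0 < x) (m j : ℕ) :
    ris x (m + j) / (m + j).factorial * (ris (-(m + j : ℕ)) j / ris (1 - x - (m + j : ℕ)) j) =
      ris x m / m.factorial := by
  have : 0 < ris (x + m) j := ris_pos (by positivity) j
  have : 0 < ris (1 + m : ℝ) j := ris_pos (by positivity) j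
  have hneg : -((m + j : ℕ) : ℝ) = 1 - 1 - (m + j : ℕ) := by ring
  rw [hneg, ris_one_sub_sub, ris_one_sub_sub, mul_div_mul_left _ _ (by positivity), ← ris_one,
    ris_add, ris_add 1, ris_one]
  field_simp

lemma wellPoised_mul_shift {a e : ℝ} (he : 0 < e) (b c : ℝ) (m j : ℕ) :
    wellPoised a [b, c, e] (m + j) * (ris (a + (m + j : ℕ)) j / ris (1 - e - (m + j : ℕ)) j *
        (ris (-(m + j : ℕ)) j / ris (1 + a - e + (m + j : ℕ)) j)) =
      ris a (j + j) / ris (1 + a - e) (j + j) * (ris b j / ris (1 + a - b) j) *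
        (ris c j / ris (1 + a - c) j) *
        wellPoised (a + (j + j : ℕ)) [b + j, c + j, e] m := by
  have hsplit (x : ℝ) : ris x (m + j) = ris x j * ris (x + j) m := by rw [add_comm, ris_add]
  have hpair (x : ℝ) : 1 + (a + (j + j : ℕ)) - (x + j) = 1 + a - x + j := by push_cast; ring
  have hhead : a + 2 * (m + j : ℕ) = a + (j + j : ℕ) + 2 * m := by push_cast; ring
  have hlast : 1 + (a + (j + j : ℕ)) - e = 1 + a - e + (j + j : ℕ) := by ring
  simp only [wellPoised, List.map_cons, List.map_nil, List.prod_cons, List.prod_nil]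
  rw [hpair, hpair, hlast]
  calc
    _ = (a + 2 * (m + j : ℕ)) * (ris a (m + j) * ris (a + (m + j : ℕ)) j) *
        (ris b (m + j) / ris (1 + a - b) (m + j)) * (ris c (m + j) / ris (1 + a - c) (m + j)) *
        (ris e (m + j) / (m + j).factorial *
          (ris (-(m + j : ℕ)) j / ris (1 - e - (m + j : ℕ)) j)) /
        (ris (1 + a - e) (m + j) * ris (1 + a - e + (m + j : ℕ)) j) := by
      simp only [div_eq_mul_inv, mul_inv]
      ring
    _ = _ := by
      rw [ris_mul_ris_add_natCast, ris_mul_ris_add_natCast, ris_div_factorial_mul_reflection he,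
        hhead, hsplit b, hsplit c, hsplit (1 + a - b), hsplit (1 + a - c)]
      simp only [div_eq_mul_inv, mul_inv]
      ring

variable {A B C D a b c : ℝ}

/-- The double series of Bailey's transformation: its sum over `j` is a terminating Dougall sum,
its sum over `n` a nonterminating one. -/
noncomputable def baileyTerm (A B C D b c : ℝ) (j n : ℕ) : ℝ :=
  wellPoised (1 + 2 * A - B - C - D) [b, c, 1 + A - B - C - D] n *
    wellPoised A [B, C, D, 1 + 2 * A - B - C - D + n, -n] j

lemma baileyTerm_of_lt {j n : ℕ} (h : n < j) : baileyTerm A B C D b c j n = 0 := by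
  simp [baileyTerm, wellPoised, ris_neg_natCast_eq_zero h]

lemma baileyTerm_add (ha : a = 1 + 2 * A - B - C - D) (hδ : 0 < 1 + A - B - C - D) (m j : ℕ) :
    baileyTerm A B C D b c j (m + j) = wellPoised A [B, C, D] j *
      (ris a (j + j) / ris (1 + A) (j + j) * (ris b j / ris (1 + a - b) j) *
        (ris c j / ris (1 + a - c) j)) *
      wellPoised (a + (j + j : ℕ)) [b + j, c + j, 1 + A - B - C - D] m := by
  have hshift := wellPoised_mul_shift (a := a) hδ b c m j
  rw [show 1 + a - (1 + A - B - C - D) = 1 + A by rw [ha]; ring] at hshift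
  rw [mul_assoc, ← hshift, baileyTerm, ← ha]
  simp only [wellPoised, List.map_cons, List.map_nil, List.prod_cons, List.prod_nil]
  rw [show 1 + A - (a + (m + j : ℕ)) = 1 - (1 + A - B - C - D) - (m + j : ℕ) by rw [ha]; ring,
    sub_neg_eq_add]
  ring

lemma baileyTerm_nonneg (hA : 0 < A) (hB : 0 < B) (hC : 0 < C) (hD : 0 < D) (hb : 0 < b)
    (hc : 0 < c) (hbc : b + c < 1 + A) (hδ : 0 < 1 + A - B - C - D) (j n : ℕ) :
    0 ≤ baileyTerm A B C D b c j n := by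
  rcases lt_or_ge n j with h | h
  · rw [baileyTerm_of_lt h]
  obtain ⟨m, rfl⟩ := Nat.exists_eq_add_of_le' h
  have ha : 0 < 1 + 2 * A - B - C - D := by linarith
  have hquot {x y : ℝ} (hx : 0 < x) (hy : 0 < y) (k : ℕ) : 0 ≤ ris x k / ris y k :=
    div_nonneg (ris_pos hx k).le (ris_pos hy k).le
  rw [baileyTerm_add rfl hδ]
  refine mul_nonneg (mul_nonneg (wellPoised_nonneg hA ?_ j) (mul_nonneg (mul_nonneg
    (hquot ha (by linarith) _) (hquot hb (by linarith) j)) (hquot hc (by linarith) j)))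
    (wellPoised_nonneg (by positivity) ?_ m)
  · simp only [List.mem_cons, List.not_mem_nil, or_false, forall_eq_or_imp, forall_eq]
    refine ⟨⟨hB, ?_⟩, ⟨hC, ?_⟩, hD, ?_⟩ <;> linarith
  · simp only [List.mem_cons, List.not_mem_nil, or_false, forall_eq_or_imp, forall_eq]
    push_cast
    refine ⟨⟨by positivity, ?_⟩, ⟨by positivity, ?_⟩, hδ, ?_⟩ <;> linarith

lemma hasSum_baileyTerm_column (hA : -1 < A) (hB : 0 < 1 + A - B) (hC : 0 < 1 + A - C)
    (hD : 0 < 1 + A - D) (hδ : 0 < 1 + A - B - C - D) (n : ℕ) :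
    HasSum (fun j => baileyTerm A B C D b c j n)
      (A * wellPoised (1 + 2 * A - B - C - D)
        [b, c, 1 + A - B - C, 1 + A - B - D, 1 + A - C - D] n) := by
  have hfinite : HasSum (fun j => baileyTerm A B C D b c j n)
      (∑ j ∈ Finset.range (n + 1), baileyTerm A B C D b c j n) :=
    hasSum_sum_of_ne_finset_zero fun j hj => baileyTerm_of_lt (by simpa using hj)
  have hcancel {x y : ℝ} (hx : x ≠ 0) (hy : y ≠ 0) (w X Y Z P Q R : ℝ) :
      x / y * w * (A * (y * X * Y * Z) / (P * Q * R * x)) =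
        A * (X / R * (Y / Q * (Z / P * w))) := by
    field_simp
  have hvalue : ∑ j ∈ Finset.range (n + 1), baileyTerm A B C D b c j n =
      A * wellPoised (1 + 2 * A - B - C - D)
        [b, c, 1 + A - B - C, 1 + A - B - D, 1 + A - C - D] n := by
    simp only [baileyTerm]
    rw [← Finset.mul_sum, sum_wellPoised_dougall hA hB hC hD hδ]
    simp only [wellPoised_cons]
    rw [show 1 + (1 + 2 * A - B - C - D) - (1 + A - B - C - D) = 1 + A by ring,
      show 1 + (1 + 2 * A - B - C - D) - (1 + A - B - C) = 1 + A - D by ring,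
      show 1 + (1 + 2 * A - B - C - D) - (1 + A - B - D) = 1 + A - C by ring,
      show 1 + (1 + 2 * A - B - C - D) - (1 + A - C - D) = 1 + A - B by ring]
    rw [mul_assoc, mul_assoc, hcancel (ris_pos hδ n).ne' (ris_pos (by linarith) n).ne',
      mul_left_comm _ A, mul_left_comm _ A]
  exact hvalue ▸ hfinite

lemma ris_mul_gaussValue_div (hb : 0 < b) (hc : 0 < c) (hbc : b + c < 1 + A) (hAa : A < a)
    (j : ℕ) :
    ris a (j + j) / ris (1 + A) (j + j) * (ris b j / ris (1 + a - b) j) *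
        (ris c j / ris (1 + a - c) j) *
        ((a + (j + j : ℕ)) * gaussValue (b + j) (c + j) (1 + A + (j + j : ℕ)) /
          gaussValue (b + j) (c + j) (1 + a + (j + j : ℕ))) =
      a * (gaussValue b c (1 + A) / gaussValue b c (1 + a)) *
        (ris b j / ris (1 + A - b) j * (ris c j / ris (1 + A - c) j)) := by
  have hhead : ris a (j + j) * (a + (j + j : ℕ)) = a * ris (1 + a) (j + j) := by
    rw [← ris_succ, ris_succ_left, add_comm a]
  have := gaussValue_pos hb hc (by linarith : b + c < 1 + a)
  have : 0 < ris (1 + A) (j + j) := ris_pos (by linarith) _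
  have : 0 < ris (1 + a) (j + j) := ris_pos (by linarith) _
  have : 0 < ris (1 + a - b) j := ris_pos (by linarith) j
  have : 0 < ris (1 + a - c) j := ris_pos (by linarith) j
  have : 0 < ris (1 + A - b) j := ris_pos (by linarith) j
  have : 0 < ris (1 + A - c) j := ris_pos (by linarith) j
  rw [gaussValue_add_natCast hb hc hbc, gaussValue_add_natCast hb hc (by linarith)]
  field_simp
  linear_combination ris b j * ris c j * gaussValue b c (1 + A) * hhead

lemma hasSum_baileyTerm_row (ha : a = 1 + 2 * A - B - C - D) (ha₀ : 0 < a) (hb : 0 < b)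
    (hc : 0 < c) (hbc : b + c < 1 + A) (hδ : 0 < 1 + A - B - C - D) (j : ℕ) :
    HasSum (baileyTerm A B C D b c j)
      (a * (gaussValue b c (1 + A) / gaussValue b c (1 + a)) *
        wellPoised A [b, c, B, C, D] j) := by
  have hvanish : ∑ n ∈ Finset.range j, baileyTerm A B C D b c j n = 0 :=
    Finset.sum_eq_zero fun n hn => baileyTerm_of_lt (Finset.mem_range.mp hn)
  rw [← hasSum_nat_add_iff' j, hvanish, sub_zero]
  simp only [baileyTerm_add ha hδ]
  have hdougall := hasSum_wellPoised_dougall (a := a + (j + j : ℕ)) (b := 1 + A - B - C - D)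
    (c := c + j) (d := b + j) (by positivity) hδ (by positivity) (by positivity)
    (by push_cast; linarith)
  have hperm : [1 + A - B - C - D, c + j, b + j].Perm [b + j, c + j, 1 + A - B - C - D] :=
    (List.reverse_perm _).symm
  rw [wellPoised_perm hperm, ← add_assoc, show 1 + a + ((j + j : ℕ) : ℝ) - (1 + A - B - C - D) =
    1 + A + (j + j : ℕ) by rw [ha]; ring] at hdougall
  have hvalue : a * (gaussValue b c (1 + A) / gaussValue b c (1 + a)) *
      wellPoised A [b, c, B, C, D] j = wellPoised A [B, C, D] j *
      (a * (gaussValue b c (1 + A) / gaussValue b c (1 + a)) *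
        (ris b j / ris (1 + A - b) j * (ris c j / ris (1 + A - c) j))) := by
    rw [wellPoised_cons, wellPoised_cons]
    ring
  rw [hvalue, ← ris_mul_gaussValue_div hb hc hbc (by linarith)]
  simp only [mul_assoc (wellPoised A [B, C, D] j)]
  exact (hdougall.mul_left _).mul_left _

theorem hasSum_wellPoised_bailey {S : ℝ} (hA : 0 < A) (hB : 0 < B) (hC : 0 < C) (hD : 0 < D)
    (hb : 0 < b) (hc : 0 < c) (hbc : b + c < 1 + A) (hδ : 0 < 1 + A - B - C - D)
    (ha : a = 1 + 2 * A - B - C - D) (hS : HasSum (wellPoised A [b, c, B, C, D]) S) :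
    HasSum (wellPoised a [b, c, 1 + A - B - C, 1 + A - B - D, 1 + A - C - D])
      (a / A * (gaussValue b c (1 + A) / gaussValue b c (1 + a)) * S) := by
  have hswap := hasSum_swap_of_nonneg (baileyTerm_nonneg hA hB hC hD hb hc hbc hδ)
    (hasSum_baileyTerm_row ha (by linarith) hb hc hbc hδ)
    (hasSum_baileyTerm_column (by linarith) (by linarith) (by linarith) (by linarith) hδ)
    (hS.mul_left _)
  rw [← ha] at hswap
  rw [div_mul_eq_mul_div, div_mul_eq_mul_div]
  exact (hswap.div_const A).congr_fun fun n => (mul_div_cancel_left₀ _ hA.ne').symm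

end Bailey

section IntegralOfProduct

lemma hasSum_pFq_two_one {b c p x : ℝ} (hb : 0 < b) (hc : 0 < c) (hp : 0 < p) (hx : |x| < 1) :
    HasSum (fun i => ris b i * ris c i / i.factorial / ris p i * x ^ i) (pFq [b, c] [p] x) := by
  have hterm (i : ℕ) : ris b i * ris c i / i.factorial / ris p i * x ^ i =
      ordinaryHypergeometricSeries ℝ b c p i fun _ => x := by
    rw [ordinaryHypergeometricSeries_apply_eq, ← ris_eq_ascPochhammer_eval,
      ← ris_eq_ascPochhammer_eval, ← ris_eq_ascPochhammer_eval, smul_eq_mul]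
    ring
  have hne {y : ℝ} (hy : 0 < y) (n : ℕ) : (n : ℝ) ≠ -y := by linarith [n.cast_nonneg (α := ℝ)]
  have hsummable : Summable fun i => ris b i * ris c i / i.factorial / ris p i * x ^ i := by
    simp only [hterm]
    refine (ordinaryHypergeometricSeries ℝ b c p).summable ?_
    rw [ordinaryHypergeometricSeries_radius_eq_one ℝ b c p
      fun n => ⟨hne hb n, hne hc n, hne hp n⟩]
    simpa [Metric.mem_eball, edist_dist] using hx
  convert hsummable.hasSum using 1
  refine tsum_congr fun i => ?_
  simp only [List.map_cons, List.map_nil, List.prod_cons, List.prod_nil]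
  ring

variable {a p S : ℝ}

lemma beta_add_eq_jacobiGram (ha : 0 < a) (hp : 0 < p) (hpa : p < 1 + a) (i k : ℕ) :
    beta (p + (i + k : ℕ)) (1 + a - p) / (ris p i * ris p k) =
      beta p (1 + a - p) / a * jacobiGram a p i k := by
  rw [beta_add_natCast_left hp (by linarith), add_sub_cancel, jacobiGram]
  field_simp

lemma hasSum_weight_mul_mul {u v : ℕ → ℝ} {x y z w : ℝ} (hu : ∀ i, 0 ≤ u i) (hv : ∀ k, 0 ≤ v k)
    (hp : 0 < p) (hx : 0 < x) (hy : HasSum (fun i => u i / ris p i * x ^ i) y)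
    (hz : HasSum (fun k => v k / ris p k * x ^ k) z) :
    HasSum (fun q : ℕ × ℕ => u q.1 * v q.2 / (ris p q.1 * ris p q.2) *
      (x ^ (p + (q.1 + q.2 : ℕ) - 1) * w)) (x ^ (p - 1) * w * (y * z)) := by
  have hnonneg {f : ℕ → ℝ} (hf : ∀ i, 0 ≤ f i) (i : ℕ) : 0 ≤ f i / ris p i * x ^ i :=
    mul_nonneg (div_nonneg (hf i) (ris_pos hp i).le) (by positivity)
  have hprod := hy.mul hz (hy.summable.mul_of_nonneg hz.summable (hnonneg hu) (hnonneg hv))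
  refine (hprod.mul_left _).congr_fun fun q => ?_
  rw [add_sub_right_comm, Real.rpow_add_natCast hx.ne', pow_add]
  ring

theorem integral_weight_mul_mul (ha : 0 < a) (hp : 0 < p) (hpa : p < 1 + a) {u v : ℕ → ℝ}
    {f g : ℝ → ℝ} (hu : ∀ i, 0 ≤ u i) (hv : ∀ k, 0 ≤ v k)
    (hf : ∀ x ∈ Ioo (0 : ℝ) 1, HasSum (fun i => u i / ris p i * x ^ i) (f x))
    (hg : ∀ x ∈ Ioo (0 : ℝ) 1, HasSum (fun k => v k / ris p k * x ^ k) (g x))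
    (hS : HasSum (fun q : ℕ × ℕ => u q.1 * v q.2 * jacobiGram a p q.1 q.2) S) :
    ∫ x in Ioo (0 : ℝ) 1, x ^ (p - 1) * (1 - x) ^ (1 + a - p - 1) * (f x * g x) =
      beta p (1 + a - p) / a * S := by
  set F : ℕ × ℕ → ℝ → ℝ := fun q x => u q.1 * v q.2 / (ris p q.1 * ris p q.2) *
    (x ^ (p + (q.1 + q.2 : ℕ) - 1) * (1 - x) ^ (1 + a - p - 1))
  have hweight : 0 < 1 + a - p := by linarith
  have hintegrable (q : ℕ × ℕ) : IntegrableOn (F q) (Ioo 0 1) :=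
    (integrableOn_betaIntegrand (by positivity) hweight).const_mul _
  have hintegral (q : ℕ × ℕ) : ∫ x in Ioo (0 : ℝ) 1, F q x =
      beta p (1 + a - p) / a * (u q.1 * v q.2 * jacobiGram a p q.1 q.2) := by
    rw [integral_const_mul, integral_betaIntegrand (by positivity) hweight, mul_left_comm,
      ← beta_add_eq_jacobiGram ha hp hpa]
    ring
  have hnorm (q : ℕ × ℕ) : ∫ x in Ioo (0 : ℝ) 1, ‖F q x‖ = ∫ x in Ioo (0 : ℝ) 1, F q x := by
    refine setIntegral_congr_fun measurableSet_Ioo fun x hx => Real.norm_of_nonneg ?_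
    have := hx.1
    have := sub_pos.mpr hx.2
    have := hu q.1
    have := hv q.2
    have := ris_pos hp q.1
    have := ris_pos hp q.2
    positivity
  have hscaled := hS.mul_left (beta p (1 + a - p) / a)
  have hsum := hasSum_integral_of_summable_integral_norm hintegrable
    (by simpa only [hnorm, hintegral] using hscaled.summable)
  simp only [hintegral] at hsum
  rw [hscaled.unique hsum]
  exact setIntegral_congr_fun measurableSet_Ioo fun x hx =>
    (hasSum_weight_mul_mul hu hv hp hx.1 (hf x hx) (hg x hx)).tsum_eq.symm

theorem integral_pFq_mul_pFq {b c b' c' : ℝ} (ha : 0 < a) (hp : 0 < p) (hpa : p < 1 + a)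
    (hb : 0 < b) (hc : 0 < c) (hbc : b + c < 1 + a) (hb' : 0 < b') (hc' : 0 < c')
    (hbc' : b' + c' < 1 + a) (hS : HasSum (wellPoised a [b, c, b', c', 1 + a - p]) S) :
    ∫ x in Ioo (0 : ℝ) 1, x ^ (p - 1) * (1 - x) ^ (1 + a - p - 1) *
        (pFq [b, c] [p] x * pFq [b', c'] [p] x) =
      beta p (1 + a - p) / a * (gaussValue b c (1 + a) * gaussValue b' c' (1 + a) * S) := by
  have hpos {x y : ℝ} (hx : 0 < x) (hy : 0 < y) (i : ℕ) : 0 ≤ ris x i * ris y i / i.factorial :=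
    div_nonneg (mul_nonneg (ris_pos hx i).le (ris_pos hy i).le) (Nat.cast_nonneg _)
  have habs {x : ℝ} (hx : x ∈ Ioo (0 : ℝ) 1) : |x| < 1 := abs_lt.mpr ⟨by linarith [hx.1], hx.2⟩
  refine integral_weight_mul_mul ha hp hpa (hpos hb hc) (hpos hb' hc')
    (fun x hx => hasSum_pFq_two_one hb hc hp (habs hx))
    (fun x hx => hasSum_pFq_two_one hb' hc' hp (habs hx)) ?_
  refine (hasSum_jacobiGram_iff ha hp hpa (hpos hb hc) (hpos hb' hc')
    (hasSum_mul_jacobiMoment hb hc hbc) (hasSum_mul_jacobiMoment hb' hc' hbc')).mpr ?_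
  refine (hS.mul_left _).congr_fun fun m => ?_
  simp only [wellPoised_cons]
  ring

end IntegralOfProduct

section Specialization

lemma wellPoised_half_cons {a : ℝ} (ha : 0 < a) (s : List ℝ) (n : ℕ) :
    wellPoised a (a / 2 :: s) n =
      a * (ris a n / n.factorial * (s.map fun b => ris b n / ris (1 + a - b) n).prod) := by
  have hshift : ris (a / 2) n * (a / 2 + n) = a / 2 * ris (1 + a / 2) n := by
    rw [← ris_succ, ris_succ_left, add_comm 1]
  have : 0 < ris (1 + a / 2) n := ris_pos (by positivity) n
  have hhead : ris (a / 2) n / ris (1 + a / 2) n * (a + 2 * n) = a := by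
    rw [div_mul_eq_mul_div, div_eq_iff this.ne']
    linear_combination 2 * hshift
  rw [wellPoised_cons, wellPoised, show 1 + a - a / 2 = 1 + a / 2 by ring]
  linear_combination (ris a n / n.factorial *
    (s.map fun b => ris b n / ris (1 + a - b) n).prod) * hhead

lemma summable_ris_mul_div_pow {a b c d e : ℝ} (ha : 0 < a) (hb : 0 < b) (hc : a + b < c)
    (hd : 0 < d) (hde : d ≤ e) (k : ℕ) :
    Summable fun n : ℕ =>
      ris a n * ris b n / (n.factorial * ris c n) * (ris d n / ris e n) ^ k := by
  have hratio (n : ℕ) : 0 ≤ ris d n / ris e n ∧ ris d n / ris e n ≤ 1 :=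
    ⟨(div_pos (ris_pos hd n) (ris_pos (hd.trans_le hde) n)).le,
      (div_le_one (ris_pos (hd.trans_le hde) n)).mpr (ris_le_ris hd hde n)⟩
  have hgauss (n : ℕ) : 0 ≤ ris a n * ris b n / (n.factorial * ris c n) := by
    have := ris_pos ha n
    have := ris_pos hb n
    have := ris_pos (by linarith : 0 < c) n
    positivity
  exact (hasSum_gaussValue ha hb hc).summable.of_nonneg_of_le
    (fun n => mul_nonneg (hgauss n) (pow_nonneg (hratio n).1 k))
    fun n => mul_le_of_le_one_right (hgauss n) (pow_le_one₀ (hratio n).1 (hratio n).2)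

lemma hasSum_wellPoised_one_third :
    HasSum (wellPoised (1 / 3) [1 / 3, 1 / 2, 1 / 6, 1 / 2, 1 / 2])
      (1 / 3 * pFq [1 / 3, 1 / 3, 1 / 2, 1 / 2, 1 / 2] [5 / 6, 5 / 6, 5 / 6, 1] 1) := by
  have hperm : [1 / 3, 1 / 2, 1 / 6, 1 / 2, 1 / 2].Perm
      [(1 / 3 : ℝ) / 2, 1 / 3, 1 / 2, 1 / 2, 1 / 2] := by
    rw [show (1 / 3 : ℝ) / 2 = 1 / 6 by norm_num]
    exact List.perm_middle (l₁ := [1 / 3, 1 / 2])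
  set t : ℕ → ℝ := fun j =>
    ris (1 / 3) j * ris (1 / 3) j / (j.factorial * ris 1 j) * (ris (1 / 2) j / ris (5 / 6) j) ^ 3
  have hterm (j : ℕ) : wellPoised (1 / 3) [1 / 3, 1 / 2, 1 / 6, 1 / 2, 1 / 2] j = 1 / 3 * t j := by
    rw [wellPoised_perm hperm, wellPoised_half_cons (by norm_num)]
    simp only [List.map_cons, List.map_nil, List.prod_cons, List.prod_nil, t]
    norm_num only
    ring
  have hpFq : pFq [1 / 3, 1 / 3, 1 / 2, 1 / 2, 1 / 2] [5 / 6, 5 / 6, 5 / 6, 1] 1 = ∑' j, t j := by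
    refine tsum_congr fun j => ?_
    simp only [List.map_cons, List.map_nil, List.prod_cons, List.prod_nil, one_pow, t]
    ring
  have hsummable : Summable t := summable_ris_mul_div_pow (by norm_num) (by norm_num)
    (by norm_num) (by norm_num) (by norm_num) 3
  rw [hpFq]
  exact (hsummable.hasSum.mul_left _).congr_fun hterm

lemma hasSum_wellPoised_one_half :
    HasSum (wellPoised (1 / 2) [1 / 3, 2 / 3, 1 / 3, 2 / 3, 1 / 2])
      (1 / 2 * (gaussValue (1 / 3) (1 / 2) (4 / 3) / gaussValue (1 / 3) (1 / 2) (3 / 2)) *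
        pFq [1 / 3, 1 / 3, 1 / 2, 1 / 2, 1 / 2] [5 / 6, 5 / 6, 5 / 6, 1] 1) := by
  have hbailey := hasSum_wellPoised_bailey (A := 1 / 3) (B := 1 / 6) (C := 1 / 2) (D := 1 / 2)
    (a := 1 / 2) (b := 1 / 3) (c := 1 / 2) (by norm_num) (by norm_num) (by norm_num) (by norm_num)
    (by norm_num) (by norm_num) (by norm_num) (by norm_num) (by norm_num)
    hasSum_wellPoised_one_third
  norm_num only at hbailey ⊢
  have hperm : [1 / 3, 2 / 3, 1 / 3, 2 / 3, 1 / 2].Perm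
      [(1 / 3 : ℝ), 1 / 2, 2 / 3, 2 / 3, 1 / 3] := by
    grind
  rw [wellPoised_perm hperm]
  convert hbailey using 1
  ring

lemma Gamma_one_third_mul_Gamma_two_thirds : Gamma (1 / 3) * Gamma (2 / 3) = 2 * π / √3 := by
  have h := Real.Gamma_mul_Gamma_one_sub (1 / 3)
  rw [show (1 - 1 / 3 : ℝ) = 2 / 3 by norm_num, mul_one_div, Real.sin_pi_div_three] at h
  rw [h]
  field_simp

lemma Gamma_one_sixth_mul_Gamma_five_sixths : Gamma (1 / 6) * Gamma (5 / 6) = 2 * π := by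
  have h := Real.Gamma_mul_Gamma_one_sub (1 / 6)
  rw [show (1 - 1 / 6 : ℝ) = 5 / 6 by norm_num, mul_one_div, Real.sin_pi_div_six] at h
  rw [h]
  field_simp

lemma Gamma_one_sixth_mul_Gamma_two_thirds :
    Gamma (1 / 6) * Gamma (2 / 3) = Gamma (1 / 3) * 2 ^ (2 / 3 : ℝ) * √π := by
  convert Real.Gamma_mul_Gamma_add_half (1 / 6) using 3 <;> norm_num

lemma Gamma_three_halves : Gamma (3 / 2) = √π / 2 := by
  rw [show (3 / 2 : ℝ) = 1 / 2 + 1 by norm_num, Real.Gamma_add_one (by norm_num),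
    Real.Gamma_one_half_eq]
  ring

lemma Gamma_seven_sixths : Gamma (7 / 6) = Gamma (1 / 6) / 6 := by
  rw [show (7 / 6 : ℝ) = 1 / 6 + 1 by norm_num, Real.Gamma_add_one (by norm_num)]
  ring

lemma beta_one_one_half : beta 1 (1 / 2) = 2 := by
  rw [beta, show (1 + 1 / 2 : ℝ) = 3 / 2 by norm_num, Gamma_three_halves, Real.Gamma_one,
    Real.Gamma_one_half_eq]
  field_simp

lemma gaussValue_one_third_two_thirds : gaussValue (1 / 3) (2 / 3) (3 / 2) = 3 / 2 := by
  have hden : Gamma (7 / 6) * Gamma (5 / 6) = π / 3 := by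
    rw [Gamma_seven_sixths, div_mul_eq_mul_div, Gamma_one_sixth_mul_Gamma_five_sixths]
    ring
  rw [gaussValue]
  norm_num only
  rw [hden, Gamma_three_halves, Real.Gamma_one_half_eq, div_mul_eq_mul_div,
    Real.mul_self_sqrt Real.pi_nonneg]
  field_simp

lemma gaussValue_ratio_eq_Gamma :
    gaussValue (1 / 3) (1 / 2) (4 / 3) / gaussValue (1 / 3) (1 / 2) (3 / 2) =
      Gamma (1 / 3) * Gamma (1 / 6) / (9 * (Gamma (5 / 6) * Gamma (2 / 3))) := by
  have hfour : Gamma (4 / 3) = Gamma (1 / 3) / 3 := by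
    rw [show (4 / 3 : ℝ) = 1 / 3 + 1 by norm_num, Real.Gamma_add_one (by norm_num)]
    ring
  rw [gaussValue, gaussValue]
  norm_num only
  rw [hfour, Gamma_seven_sixths, Gamma_three_halves, Real.Gamma_one_half_eq, Real.Gamma_one]
  have := Gamma_pos_of_pos (by norm_num : (0 : ℝ) < 2 / 3)
  have := Gamma_pos_of_pos (by norm_num : (0 : ℝ) < 1 / 6)
  have := Gamma_pos_of_pos (by norm_num : (0 : ℝ) < 5 / 6)
  field_simp
  norm_num

lemma two_rpow_eleven_thirds : (2 : ℝ) ^ (11 / 3 : ℝ) = 32 / (2 ^ (2 / 3 : ℝ)) ^ 2 := by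
  rw [eq_div_iff (by positivity), ← Real.rpow_natCast, ← Real.rpow_mul zero_le_two,
    ← Real.rpow_add zero_lt_two]
  norm_num

lemma gaussValue_ratio :
    9 / 2 * (gaussValue (1 / 3) (1 / 2) (4 / 3) / gaussValue (1 / 3) (1 / 2) (3 / 2)) =
      3 * √3 / 2 ^ (11 / 3 : ℝ) * (Gamma (1 / 3) / √π) ^ 6 := by
  have h₃ := Gamma_pos_of_pos (by norm_num : (0 : ℝ) < 1 / 3)
  have h₆ := Gamma_pos_of_pos (by norm_num : (0 : ℝ) < 1 / 6)
  have htwo : Gamma (2 / 3) = 2 * π / (√3 * Gamma (1 / 3)) := by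
    rw [← div_div, ← Gamma_one_third_mul_Gamma_two_thirds, mul_div_cancel_left₀ _ h₃.ne']
  have hfive : Gamma (5 / 6) = 2 * π / Gamma (1 / 6) := by
    rw [← Gamma_one_sixth_mul_Gamma_five_sixths, mul_div_cancel_left₀ _ h₆.ne']
  have hsix : Gamma (1 / 6) = √3 * 2 ^ (2 / 3 : ℝ) * Gamma (1 / 3) ^ 2 * √π / (2 * π) := by
    have hdup := Gamma_one_sixth_mul_Gamma_two_thirds
    rw [htwo] at hdup
    field_simp at hdup ⊢
    linear_combination hdup
  have hπ : √π ^ 8 = π ^ 4 := by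
    rw [pow_mul √π 2 4, Real.sq_sqrt Real.pi_nonneg]
  have hthree : √3 ^ 2 = 3 := Real.sq_sqrt (by norm_num)
  rw [gaussValue_ratio_eq_Gamma, hfive, htwo, hsix, two_rpow_eleven_thirds]
  field_simp
  rw [hthree, hπ]
  ring

end Specialization

theorem laporta_integral_5F4 :
    (∫ x in (0:ℝ)..1, (pFq [1/3, 2/3] [1] x)^2 / Real.sqrt (1 - x))
    = (3 * Real.sqrt 3 / (2 : ℝ) ^ ((11:ℝ)/3)) * (Gamma (1/3) / Real.sqrt π)^6 *
        pFq [1/3, 1/3, 1/2, 1/2, 1/2] [5/6, 5/6, 5/6, 1] 1 := by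
  have hweight (x : ℝ) (hx : x ∈ Ioo (0 : ℝ) 1) :
      x ^ ((1 : ℝ) - 1) * (1 - x) ^ (1 + 1 / 2 - 1 - 1 : ℝ) *
        (pFq [1 / 3, 2 / 3] [1] x * pFq [1 / 3, 2 / 3] [1] x) =
      (pFq [1/3, 2/3] [1] x)^2 / Real.sqrt (1 - x) := by
    rw [sub_self, Real.rpow_zero, show (1 + 1 / 2 - 1 - 1 : ℝ) = -(1 / 2) by norm_num,
      Real.rpow_neg (sub_pos.mpr hx.2).le, ← Real.sqrt_eq_rpow]
    ring
  have hintegral := integral_pFq_mul_pFq (a := 1 / 2) (p := 1) (b := 1 / 3) (c := 2 / 3)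
    (b' := 1 / 3) (c' := 2 / 3) (by norm_num) (by norm_num) (by norm_num) (by norm_num)
    (by norm_num) (by norm_num) (by norm_num) (by norm_num) (by norm_num)
    (by convert hasSum_wellPoised_one_half using 6; norm_num)
  rw [setIntegral_congr_fun measurableSet_Ioo hweight, add_sub_cancel_left, beta_one_one_half,
    show (1 + 1 / 2 : ℝ) = 3 / 2 by norm_num, gaussValue_one_third_two_thirds] at hintegral
  rw [intervalIntegral.integral_of_le zero_le_one, integral_Ioc_eq_integral_Ioo, hintegral,
    ← gaussValue_ratio]
  ring
end

section
/- ∫₀^∞ I₀(t)[K₀(t)]⁵ t³ dt = (π²/3)·∫₀^∞ I₀(t)K₀(t)·( [I₀(t)]²[K₀(t)]² − 1/(4t²) )·t³ dt. -/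
open Real MeasureTheory Set

/-!
The function `√(2w) eʷ K₀(w)` equals `F((2w)⁻¹)`, where
`F(z) = ∫₀^∞ e⁻ʳ r^(-1/2) (1 + rz)^(-1/2) dr` is bounded, holomorphic off the real axis, and
`√π (1 - z/4) + O(z²)`. Hence `H(w) = F((2w)⁻¹) F(-(2w)⁻¹)` is bounded and `π + O(|w|⁻²)`, so that
`G = H (π² - H²)` is `O((1 + |w|²)⁻¹)`. On the imaginary axis `H`, and therefore `G`, is real, so
rotating the contour from the positive reals to the imaginary axis gives `Re ∫₀^∞ G = 0`. The
boundary value from above is `H(t) = 2π t I₀(t) K₀(t) - 2i t K₀(t)²`, and expanding `Re G` turns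
this into the identity.
-/

open Filter Topology Interval ComplexConjugate

section ParametricIntegral

variable {α E : Type*} [MeasurableSpace α] {μ : Measure α} [NormedAddCommGroup E] [NormedSpace ℂ E]

lemma norm_deriv_le_of_forall_mem_ball_norm_le {f : ℂ → E} {z₀ z : ℂ} {C ε : ℝ} (hε : 0 < ε)
    (hf : DifferentiableOn ℂ f (Metric.ball z₀ ε)) (hC : ∀ w ∈ Metric.ball z₀ ε, ‖f w‖ ≤ C)
    (hz : z ∈ Metric.ball z₀ (ε / 2)) : ‖deriv f z‖ ≤ C / (ε / 2) := by
  have hsub : Metric.ball z (ε / 2) ⊆ Metric.ball z₀ ε :=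
    Metric.ball_subset_ball' (by linarith [Metric.mem_ball.mp hz])
  have hsub' : Metric.closedBall z (ε / 2) ⊆ Metric.ball z₀ ε :=
    Metric.closedBall_subset_ball' (by linarith [Metric.mem_ball.mp hz])
  refine Complex.norm_deriv_le_of_forall_mem_sphere_norm_le (by positivity) ?_
    fun w hw => hC w (hsub' (Metric.sphere_subset_closedBall hw))
  exact ⟨hf.mono hsub, hf.continuousOn.mono (Metric.closure_ball_subset_closedBall.trans hsub')⟩

lemma aestronglyMeasurable_deriv_of_eventually {F : ℂ → α → E} {z₀ : ℂ}
    (hmeas : ∀ᶠ z in 𝓝 z₀, AEStronglyMeasurable (F z) μ)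
    (hdiff : ∀ᵐ a ∂μ, DifferentiableAt ℂ (F · a) z₀) :
    AEStronglyMeasurable (fun a => deriv (F · a) z₀) μ := by
  obtain ⟨u, hu⟩ := (𝓝[≠] (0 : ℂ)).exists_seq_tendsto
  have hu₀ : Tendsto (fun n => z₀ + u n) atTop (𝓝 z₀) := by
    simpa using (hu.mono_right nhdsWithin_le_nhds).const_add z₀
  obtain ⟨N, hN⟩ := eventually_atTop.mp (hu₀.eventually hmeas)
  refine aestronglyMeasurable_of_tendsto_ae atTop
    (f := fun n a => (u (n + N))⁻¹ • (F (z₀ + u (n + N)) a - F z₀ a))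
    (fun n => ((hN _ (by lia)).sub hmeas.self_of_nhds).const_smul _) ?_
  filter_upwards [hdiff] with a ha
  exact (hasDerivAt_iff_tendsto_slope_zero.mp ha.hasDerivAt).comp
    (hu.comp (tendsto_add_atTop_nat N))

lemma differentiableAt_integral_of_dominated {F : ℂ → α → E} {bound : α → ℝ} {z₀ : ℂ} {s : Set ℂ}
    (hs : s ∈ 𝓝 z₀) (hmeas : ∀ z ∈ s, AEStronglyMeasurable (F z) μ)
    (hdiff : ∀ᵐ a ∂μ, DifferentiableOn ℂ (F · a) s)
    (hbound : ∀ᵐ a ∂μ, ∀ z ∈ s, ‖F z a‖ ≤ bound a) (hint : Integrable bound μ) :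
    DifferentiableAt ℂ (fun z => ∫ a, F z a ∂μ) z₀ := by
  obtain ⟨ε, hε, hball⟩ := Metric.mem_nhds_iff.mp hs
  have hball' : Metric.ball z₀ (ε / 2) ⊆ Metric.ball z₀ ε := Metric.ball_subset_ball (by linarith)
  have hz₀ : z₀ ∈ s := mem_of_mem_nhds hs
  refine (hasDerivAt_integral_of_dominated_loc_of_deriv_le (F' := fun z a => deriv (F · a) z)
    (bound := fun a => bound a / (ε / 2)) (Metric.ball_mem_nhds z₀ (half_pos hε))
    (eventually_of_mem hs hmeas) (hint.mono' (hmeas z₀ hz₀) (hbound.mono fun a ha => ha z₀ hz₀))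
    (aestronglyMeasurable_deriv_of_eventually (eventually_of_mem hs hmeas)
      (hdiff.mono fun a ha => ha.differentiableAt hs)) ?_ (hint.div_const _)
      ?_).2.differentiableAt
  · filter_upwards [hdiff, hbound] with a ha hb z hz
    exact norm_deriv_le_of_forall_mem_ball_norm_le hε (ha.mono hball)
      (fun w hw => hb w (hball hw)) hz
  · filter_upwards [hdiff] with a ha z hz
    exact ((ha.mono hball).differentiableAt
      (Metric.isOpen_ball.mem_nhds (hball' hz))).hasDerivAt

end ParametricIntegral

section Quadrant

variable {E : Type*} [NormedAddCommGroup E] {f : ℂ → E} {C R x y : ℝ}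

lemma integrableOn_Ioi_of_norm_le_div_one_add_sq {f : ℝ → E}
    (hf : AEStronglyMeasurable f (volume.restrict (Ioi 0)))
    (hC : ∀ x ∈ Ioi (0 : ℝ), ‖f x‖ ≤ C / (1 + x ^ 2)) : IntegrableOn f (Ioi 0) := by
  refine (integrable_inv_one_add_sq.const_mul C).integrableOn.mono' hf ?_
  filter_upwards [ae_restrict_mem measurableSet_Ioi] with x hx
  simpa only [div_eq_mul_inv] using hC x hx

lemma nonneg_of_norm_le_div_one_add_sq {v : E} (hv : ‖v‖ ≤ C / (1 + x ^ 2)) : 0 ≤ C :=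
  (div_nonneg_iff.mp ((norm_nonneg v).trans hv)).elim (·.1) fun h => by nlinarith

lemma norm_add_mul_I_le_div_one_add_re_sq (hC₀ : 0 ≤ C)
    (hC : ∀ z ∈ Ici 0 ×ℂ Ici 0, ‖f z‖ ≤ C / (1 + ‖z‖ ^ 2)) (hx : 0 ≤ x) (hy : 0 ≤ y) :
    ‖f (x + y * Complex.I)‖ ≤ C / (1 + x ^ 2) := by
  refine (hC _ (by simp [Complex.mem_reProdIm, hx, hy])).trans ?_
  gcongr
  simpa [abs_of_nonneg hx] using Complex.abs_re_le_norm (x + y * Complex.I)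

lemma norm_add_mul_I_le_div_one_add_im_sq (hC₀ : 0 ≤ C)
    (hC : ∀ z ∈ Ici 0 ×ℂ Ici 0, ‖f z‖ ≤ C / (1 + ‖z‖ ^ 2)) (hx : 0 ≤ x) (hy : 0 ≤ y) :
    ‖f (x + y * Complex.I)‖ ≤ C / (1 + y ^ 2) := by
  refine (hC _ (by simp [Complex.mem_reProdIm, hx, hy])).trans ?_
  gcongr
  simpa [abs_of_nonneg hy] using Complex.abs_im_le_norm (x + y * Complex.I)

variable [NormedSpace ℂ E]

lemma integral_bottom_sub_left_eq_integral_top_sub_right (hR : 0 ≤ R)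
    (hf : DifferentiableOn ℂ f (Ici 0 ×ℂ Ici 0)) :
    (∫ x in 0..R, f x) - Complex.I • (∫ y in 0..R, f (y * Complex.I)) =
      (∫ x in 0..R, f (x + R * Complex.I)) - Complex.I • ∫ y in 0..R, f (R + y * Complex.I) := by
  have hsub : [[0, R]] ×ℂ [[0, R]] ⊆ Ici 0 ×ℂ Ici 0 := by
    rw [uIcc_of_le hR]
    exact fun z hz => ⟨hz.1.1, hz.2.1⟩
  have hcauchy := Complex.integral_boundary_rect_eq_zero_of_differentiableOn f 0
    (R + R * Complex.I) (by simpa using hf.mono hsub)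
  simp only [Complex.zero_re, Complex.zero_im, Complex.ofReal_zero, zero_mul, add_zero, zero_add,
    Complex.add_re, Complex.add_im, Complex.ofReal_re, Complex.ofReal_im, Complex.re_ofReal_mul,
    Complex.im_ofReal_mul, Complex.I_re, Complex.I_im, mul_zero, mul_one] at hcauchy
  rw [← sub_eq_zero, ← hcauchy]
  abel

lemma norm_intervalIntegral_le_mul_inv {f : ℝ → E} (hR : 0 < R) (hC₀ : 0 ≤ C)
    (hC : ∀ x ∈ Ioc 0 R, ‖f x‖ ≤ C / (1 + R ^ 2)) : ‖∫ x in 0..R, f x‖ ≤ C * R⁻¹ := by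
  refine (intervalIntegral.norm_integral_le_of_norm_le_const (C := C / (1 + R ^ 2))
    fun x hx => hC x (by rwa [uIoc_of_le hR.le] at hx)).trans ?_
  calc C / (1 + R ^ 2) * |R - 0| ≤ C / R ^ 2 * R := by
        rw [sub_zero, abs_of_pos hR]
        gcongr
        linarith
    _ = C * R⁻¹ := by field_simp

lemma norm_integral_top_sub_right_le (hC₀ : 0 ≤ C)
    (hC : ∀ z ∈ Ici 0 ×ℂ Ici 0, ‖f z‖ ≤ C / (1 + ‖z‖ ^ 2)) (hR : 0 < R) :
    ‖(∫ x in 0..R, f (x + R * Complex.I)) - Complex.I • ∫ y in 0..R, f (R + y * Complex.I)‖ ≤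
      2 * C * R⁻¹ := by
  have htop := norm_intervalIntegral_le_mul_inv hR hC₀
    fun x hx => norm_add_mul_I_le_div_one_add_im_sq hC₀ hC hx.1.le hR.le
  have hright := norm_intervalIntegral_le_mul_inv hR hC₀
    fun y hy => norm_add_mul_I_le_div_one_add_re_sq hC₀ hC hR.le hy.1.le
  refine (norm_sub_le _ _).trans ?_
  rw [norm_smul, Complex.norm_I, one_mul]
  linarith

theorem integral_Ioi_eq_I_smul_integral_Ioi_mul_I
    (hf : DifferentiableOn ℂ f (Ici 0 ×ℂ Ici 0))
    (hC : ∀ z ∈ Ici 0 ×ℂ Ici 0, ‖f z‖ ≤ C / (1 + ‖z‖ ^ 2)) :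
    ∫ x in Ioi (0 : ℝ), f x = Complex.I • ∫ y in Ioi (0 : ℝ), f (y * Complex.I) := by
  have hC₀ : 0 ≤ C := nonneg_of_norm_le_div_one_add_sq (hC 0 (by simp [Complex.mem_reProdIm]))
  have hbottom : IntegrableOn (fun x : ℝ => f x) (Ioi 0) :=
    integrableOn_Ioi_of_norm_le_div_one_add_sq
      ((hf.continuousOn.comp (by fun_prop) fun x hx => by
        simpa [Complex.mem_reProdIm] using hx.le).aestronglyMeasurable measurableSet_Ioi)
      fun x hx => by
        simpa using norm_add_mul_I_le_div_one_add_re_sq hC₀ hC (le_of_lt hx) (le_refl 0)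
  have hleft : IntegrableOn (fun y : ℝ => f (y * Complex.I)) (Ioi 0) :=
    integrableOn_Ioi_of_norm_le_div_one_add_sq
      ((hf.continuousOn.comp (by fun_prop) fun y hy => by
        simpa [Complex.mem_reProdIm] using hy.le).aestronglyMeasurable measurableSet_Ioi)
      fun y hy => by
        simpa using norm_add_mul_I_le_div_one_add_im_sq hC₀ hC (le_refl 0) (le_of_lt hy)
  rw [← sub_eq_zero]
  refine tendsto_nhds_unique ((intervalIntegral_tendsto_integral_Ioi 0 hbottom tendsto_id).sub
    ((intervalIntegral_tendsto_integral_Ioi 0 hleft tendsto_id).const_smul Complex.I)) ?_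
  refine squeeze_zero_norm' (a := fun R : ℝ => 2 * C * R⁻¹) ?_
    (by simpa using tendsto_inv_atTop_zero.const_mul (2 * C))
  filter_upwards [eventually_gt_atTop 0] with R hR
  simpa only [id, integral_bottom_sub_left_eq_integral_top_sub_right hR.le hf] using
    norm_integral_top_sub_right_le hC₀ hC hR

lemma re_integral_Ioi_add_mul_I_eq_zero {f : ℂ → ℂ} {C ε : ℝ} (hε : 0 < ε)
    (hf : DifferentiableOn ℂ f (Ici 0 ×ℂ Ioi 0))
    (hC : ∀ z ∈ Ici 0 ×ℂ Ioi 0, ‖f z‖ ≤ C / (1 + ‖z‖ ^ 2))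
    (hreal : ∀ y : ℝ, 0 < y → (f (y * Complex.I)).im = 0) :
    (∫ x in Ioi (0 : ℝ), f (x + ε * Complex.I)).re = 0 := by
  have hmaps : MapsTo (· + ε * Complex.I) (Ici 0 ×ℂ Ici 0) (Ici 0 ×ℂ Ioi 0) := fun z hz => by
    simpa [Complex.mem_reProdIm] using ⟨hz.1, add_pos_of_nonneg_of_pos hz.2 hε⟩
  have hC₀ : 0 ≤ C :=
    nonneg_of_norm_le_div_one_add_sq (hC Complex.I (by simp [Complex.mem_reProdIm]))
  have hnorm {z : ℂ} (hz : z ∈ Ici 0 ×ℂ Ici 0) : ‖z‖ ≤ ‖z + ε * Complex.I‖ := by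
    have him : 0 ≤ z.im := hz.2
    rw [← sq_le_sq₀ (norm_nonneg _) (norm_nonneg _), Complex.sq_norm, Complex.sq_norm,
      Complex.normSq_apply, Complex.normSq_apply]
    simp only [Complex.add_re, Complex.add_im, Complex.re_ofReal_mul, Complex.im_ofReal_mul,
      Complex.I_re, Complex.I_im, mul_zero, mul_one, add_zero]
    nlinarith
  have hrot := integral_Ioi_eq_I_smul_integral_Ioi_mul_I (C := C) (hf.comp (by fun_prop) hmaps)
    fun z hz => (hC _ (hmaps hz)).trans (by gcongr; exact hnorm hz)
  simp only [Function.comp_apply] at hrot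
  have hleft : ∫ y in Ioi (0 : ℝ), f (y * Complex.I + ε * Complex.I) =
      ((∫ y in Ioi (0 : ℝ), (f (y * Complex.I + ε * Complex.I)).re : ℝ) : ℂ) := by
    rw [← integral_complex_ofReal]
    refine setIntegral_congr_fun measurableSet_Ioi fun y (hy : 0 < y) => Complex.ext rfl ?_
    simpa [add_mul] using hreal (y + ε) (by positivity)
  rw [hrot, hleft, smul_eq_mul, mul_comm, Complex.re_ofReal_mul, Complex.I_re, mul_zero]

theorem re_integral_Ioi_eq_zero_of_tendsto {f : ℂ → ℂ} {g : ℝ → ℂ} {C : ℝ}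
    (hf : DifferentiableOn ℂ f (Ici 0 ×ℂ Ioi 0))
    (hC : ∀ z ∈ Ici 0 ×ℂ Ioi 0, ‖f z‖ ≤ C / (1 + ‖z‖ ^ 2))
    (hreal : ∀ y : ℝ, 0 < y → (f (y * Complex.I)).im = 0)
    (hlim : ∀ x : ℝ, 0 < x → Tendsto (fun ε : ℝ => f (x + ε * Complex.I)) (𝓝[>] 0) (𝓝 (g x))) :
    (∫ x in Ioi 0, g x).re = 0 := by
  have hC₀ : 0 ≤ C :=
    nonneg_of_norm_le_div_one_add_sq (hC Complex.I (by simp [Complex.mem_reProdIm]))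
  have hmem {x ε : ℝ} (hx : 0 < x) (hε : 0 < ε) : (x + ε * Complex.I : ℂ) ∈ Ici 0 ×ℂ Ioi 0 := by
    simpa [Complex.mem_reProdIm] using ⟨hx.le, hε⟩
  have hconv : Tendsto (fun ε : ℝ => ∫ x in Ioi (0 : ℝ), f (x + ε * Complex.I)) (𝓝[>] 0)
      (𝓝 (∫ x in Ioi 0, g x)) := by
    refine tendsto_integral_filter_of_dominated_convergence (fun x => C * (1 + x ^ 2)⁻¹) ?_ ?_
      (integrable_inv_one_add_sq.const_mul C).integrableOn ?_
    · filter_upwards [self_mem_nhdsWithin] with ε hε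
      exact (hf.continuousOn.comp (by fun_prop) fun x hx => hmem hx hε).aestronglyMeasurable
        measurableSet_Ioi
    · filter_upwards [self_mem_nhdsWithin] with ε hε
      filter_upwards [ae_restrict_mem measurableSet_Ioi] with x (hx : 0 < x)
      rw [← div_eq_mul_inv]
      refine (hC _ (hmem hx hε)).trans ?_
      gcongr
      simpa [abs_of_pos hx] using Complex.abs_re_le_norm (x + ε * Complex.I)
    · filter_upwards [ae_restrict_mem measurableSet_Ioi] with x hx using hlim x hx
  refine tendsto_nhds_unique_of_eventuallyEq ((Complex.continuous_re.tendsto _).comp hconv)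
    tendsto_const_nhds ?_
  filter_upwards [self_mem_nhdsWithin] with ε hε
  exact re_integral_Ioi_add_mul_I_eq_zero hε hf hC hreal

end Quadrant

section SingularKernel

variable {p k : ℝ → ℝ} {S T : Set ℝ} {B : ℝ}

lemma mul_comp_sub_le_add_mul_indicator (hp : ∀ r ∈ S, 0 ≤ p r) (hpB : ∀ r ∈ S, p r ≤ B)
    (hk : ∀ x, 0 ≤ k x) (hkT : ∀ x ∉ T, k x ≤ 1) (c : ℝ) {r : ℝ} (hr : r ∈ S) :
    p r * k (c - r) ≤ p r + B * T.indicator k (c - r) := by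
  by_cases hT : c - r ∈ T
  · rw [indicator_of_mem hT]
    linarith [hp r hr, mul_le_mul_of_nonneg_right (hpB r hr) (hk (c - r))]
  · rw [indicator_of_notMem hT, mul_zero, add_zero]
    exact mul_le_of_le_one_right (hp r hr) (hkT _ hT)

theorem integrableOn_mul_comp_sub_and_setIntegral_le (hS : MeasurableSet S)
    (hT : MeasurableSet T) (hp_int : IntegrableOn p S) (hp : ∀ r ∈ S, 0 ≤ p r) (hB : 0 ≤ B)
    (hpB : ∀ r ∈ S, p r ≤ B) (hk_meas : Measurable k) (hk : ∀ x, 0 ≤ k x)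
    (hk_int : IntegrableOn k T) (hkT : ∀ x ∉ T, k x ≤ 1) (c : ℝ) :
    IntegrableOn (fun r => p r * k (c - r)) S ∧
      ∫ r in S, p r * k (c - r) ≤ (∫ r in S, p r) + B * ∫ x in T, k x := by
  have hind : Integrable (fun r => T.indicator k (c - r)) :=
    ((integrable_indicator_iff hT).mpr hk_int).comp_sub_left c
  have hmaj : IntegrableOn (fun r => p r + B * T.indicator k (c - r)) S :=
    hp_int.add (hind.const_mul B).integrableOn
  have hle := fun r hr => mul_comp_sub_le_add_mul_indicator hp hpB hk hkT c (r := r) hr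
  have hint : IntegrableOn (fun r => p r * k (c - r)) S := by
    refine hmaj.mono' (hp_int.aestronglyMeasurable.mul
      (hk_meas.comp (measurable_const.sub measurable_id)).aestronglyMeasurable) ?_
    filter_upwards [ae_restrict_mem hS] with r hr
    rw [Real.norm_of_nonneg (mul_nonneg (hp r hr) (hk _))]
    exact hle r hr
  refine ⟨hint, ?_⟩
  calc ∫ r in S, p r * k (c - r)
      ≤ ∫ r in S, (p r + B * T.indicator k (c - r)) := setIntegral_mono_on hint hmaj hS hle
    _ = (∫ r in S, p r) + B * ∫ r in S, T.indicator k (c - r) := by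
        rw [integral_add hp_int (hind.const_mul B).integrableOn, integral_const_mul]
    _ ≤ (∫ r in S, p r) + B * ∫ r, T.indicator k (c - r) := by
        gcongr (∫ r in S, p r) + B * ?_
        exact setIntegral_le_integral hind
          (Eventually.of_forall fun r => indicator_nonneg (fun x _ => hk x) _)
    _ = (∫ r in S, p r) + B * ∫ x in T, k x := by
        rw [integral_sub_left_eq_self (T.indicator k) volume c, integral_indicator hT]

lemma inv_sqrt_eq_rpow {r : ℝ} (hr : 0 ≤ r) : (√r)⁻¹ = r ^ (-(1 / 2) : ℝ) := by
  rw [Real.sqrt_eq_rpow, Real.rpow_neg hr]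

lemma integrableOn_inv_sqrt_abs : IntegrableOn (fun x : ℝ => (√|x|)⁻¹) (Icc (-1) 1) := by
  have hright : IntervalIntegrable (fun x : ℝ => (√|x|)⁻¹) volume 0 1 := by
    refine (intervalIntegral.intervalIntegrable_rpow' (r := -(1 / 2)) (by norm_num)).congr ?_
    intro x hx
    rw [uIoc_of_le zero_le_one] at hx
    simp only [abs_of_pos hx.1, inv_sqrt_eq_rpow hx.1.le]
  have hleft : IntervalIntegrable (fun x : ℝ => (√|x|)⁻¹) volume (-1) 0 := by
    simpa using (hright.comp_sub_left 0).symm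
  exact (intervalIntegrable_iff_integrableOn_Icc_of_le (by norm_num)).mp (hleft.trans hright)

lemma inv_sqrt_abs_le_one {x : ℝ} (hx : x ∉ Icc (-1 : ℝ) 1) : (√|x|)⁻¹ ≤ 1 := by
  rw [mem_Icc, ← abs_le, not_le] at hx
  exact inv_le_one_of_one_le₀ (Real.one_le_sqrt.mpr hx.le)

end SingularKernel

section ComplexSqrt

lemma complex_sqrt_sq (z : ℂ) : z.sqrt ^ 2 = z := Complex.cpow_ofNat_inv_pow z 2

lemma norm_complex_sqrt (z : ℂ) : ‖z.sqrt‖ = √‖z‖ := by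
  rw [← Real.sqrt_sq (norm_nonneg z.sqrt), ← norm_pow, complex_sqrt_sq]

lemma complex_sqrt_re_nonneg (z : ℂ) : 0 ≤ z.sqrt.re := by
  rw [Complex.sqrt, Complex.cpow_inv_two_re]
  exact Real.sqrt_nonneg _

lemma complex_sqrt_ne_zero {z : ℂ} (hz : z ≠ 0) : z.sqrt ≠ 0 := fun h =>
  hz (by rw [← complex_sqrt_sq z, h, zero_pow two_ne_zero])

lemma complex_sqrt_conj {z : ℂ} (hz : z ∈ Complex.slitPlane) : (conj z).sqrt = conj z.sqrt := by
  simp [Complex.sqrt, Complex.conj_cpow _ _ (Complex.slitPlane_arg_ne_pi hz), Complex.conj_ofNat]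

lemma measurable_complex_sqrt : Measurable Complex.sqrt := by
  unfold Complex.sqrt
  fun_prop

lemma complex_sqrt_ofReal {a : ℝ} (ha : 0 ≤ a) : (a : ℂ).sqrt = √a := by
  rw [Complex.sqrt_of_nonneg (by exact_mod_cast ha), Complex.ofReal_re]

lemma continuousOn_complex_sqrt_im_nonneg : ContinuousOn Complex.sqrt {z | 0 ≤ z.im} := by
  have hcont : Continuous fun z : ℂ =>
      (√((‖z‖ + z.re) / 2) + √((‖z‖ - z.re) / 2) * Complex.I : ℂ) := by fun_prop
  refine hcont.continuousOn.congr fun z (hz : 0 ≤ z.im) => ?_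
  rw [Complex.sqrt_eq_real_add_ite, if_pos hz, one_mul]

/-- With `s = √(1 + u)`, the error equals `(s - 1)² (s + 2) / (2 s)`, while `u = (s - 1) (s + 1)`
and `1 ≤ ‖s + 1‖` because the principal root has nonnegative real part. -/
lemma norm_inv_complex_sqrt_one_add_sub_le {u : ℂ} (hu : 1 + u ≠ 0) :
    ‖((1 + u).sqrt)⁻¹ - (1 - u / 2)‖ ≤ ‖u‖ ^ 2 * ‖((1 + u).sqrt)⁻¹‖ := by
  have hs₀ := complex_sqrt_ne_zero hu
  have hre := complex_sqrt_re_nonneg (1 + u)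
  have hu_eq : u = (1 + u).sqrt ^ 2 - 1 := by rw [complex_sqrt_sq]; ring
  generalize (1 + u).sqrt = s at hs₀ hre hu_eq ⊢
  subst hu_eq
  have herr : s⁻¹ - (1 - (s ^ 2 - 1) / 2) = (s - 1) ^ 2 * ((s + 2) / 2) * s⁻¹ := by
    field_simp
    ring
  have hone : 1 ≤ ‖s + 1‖ := (by simpa using hre : 1 ≤ (s + 1).re).trans (Complex.re_le_norm _)
  have htwo : ‖(s + 2) / 2‖ ≤ ‖s + 1‖ ^ 2 := by
    have h := norm_add_le (s + 1) 1
    rw [add_assoc, one_add_one_eq_two, norm_one] at h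
    rw [norm_div, Complex.norm_ofNat]
    nlinarith
  rw [herr, norm_mul, norm_mul, norm_pow,
    show ‖s ^ 2 - 1‖ ^ 2 = ‖s - 1‖ ^ 2 * ‖s + 1‖ ^ 2 by rw [← mul_pow, ← norm_mul]; ring_nf]
  gcongr

end ComplexSqrt

section GammaWeight

lemma pow_mul_exp_neg_div_sqrt_eq (n : ℕ) {r : ℝ} (hr : 0 < r) :
    r ^ n * (rexp (-r) / √r) = rexp (-r) * r ^ ((n + 1 / 2 : ℝ) - 1) := by
  rw [div_eq_mul_inv, inv_sqrt_eq_rpow hr.le,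
    show (n + 1 / 2 : ℝ) - 1 = n + -(1 / 2) by ring, Real.rpow_add hr, Real.rpow_natCast]
  ring

lemma integrableOn_pow_mul_exp_neg_div_sqrt (n : ℕ) :
    IntegrableOn (fun r : ℝ => r ^ n * (rexp (-r) / √r)) (Ioi 0) :=
  (Real.GammaIntegral_convergent (s := n + 1 / 2) (by positivity)).congr_fun
    (fun _ hr => (pow_mul_exp_neg_div_sqrt_eq n hr).symm) measurableSet_Ioi

lemma integral_pow_mul_exp_neg_div_sqrt (n : ℕ) :
    ∫ r in Ioi (0 : ℝ), r ^ n * (rexp (-r) / √r) = Real.Gamma (n + 1 / 2) := by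
  rw [Real.Gamma_eq_integral (by positivity)]
  exact setIntegral_congr_fun measurableSet_Ioi fun r hr => pow_mul_exp_neg_div_sqrt_eq n hr

lemma integrableOn_pow_mul_exp_neg (n : ℕ) :
    IntegrableOn (fun r : ℝ => r ^ n * rexp (-r)) (Ioi 0) := by
  simpa [mul_comm] using Real.GammaIntegral_convergent (s := n + 1) (by positivity)

lemma pow_mul_exp_neg_le_factorial (n : ℕ) {r : ℝ} (hr : 0 ≤ r) :
    r ^ n * rexp (-r) ≤ n.factorial := by
  have h := Real.pow_div_factorial_le_exp r hr n
  rw [div_le_iff₀ (by positivity)] at h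
  rwa [Real.exp_neg, ← div_eq_mul_inv, div_le_iff₀ (Real.exp_pos r), mul_comm]

end GammaWeight

section ScaledK0

/-- The holomorphic continuation `z ↦ ∫₀^∞ e⁻ʳ r^(-1/2) (1 + r z)^(-1/2) dr` to the slit plane of
the function with `scaledK0 (2 w)⁻¹ = √(2 w) eʷ K₀(w)`. With the principal square root, its value
on the cut `z < 0` is the boundary value from the upper half-plane. -/
noncomputable def scaledK0 (z : ℂ) : ℂ :=
  ∫ r in Ioi (0 : ℝ), ((rexp (-r) / √r : ℝ) : ℂ) * ((1 + r * z).sqrt)⁻¹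

variable {r : ℝ} {z : ℂ}

lemma measurable_inv_sqrt_one_add_mul (z : ℂ) : Measurable fun r : ℝ => ((1 + r * z).sqrt)⁻¹ :=
  (measurable_complex_sqrt.comp (by fun_prop)).inv

lemma abs_one_sub_mul_norm_le (hr : 0 ≤ r) (z : ℂ) : |1 - r * ‖z‖| ≤ ‖1 + r * z‖ := by
  simpa [abs_of_nonneg hr] using abs_norm_sub_norm_le 1 (-(r * z))

lemma inv_sqrt_abs_one_sub_div_le {c : ℝ} (hc : 0 < c) (hr : 0 ≤ r) (hrc : r ≠ c) :
    (√|1 - r / c|)⁻¹ ≤ 1 + √r * (√|c - r|)⁻¹ := by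
  have hne : √|c - r| ≠ 0 := (Real.sqrt_pos.mpr (abs_pos.mpr (sub_ne_zero.mpr hrc.symm))).ne'
  have hsqrt : √c ≤ √|c - r| + √r := by
    rw [Real.sqrt_le_left (by positivity), add_sq, Real.sq_sqrt (abs_nonneg _), Real.sq_sqrt hr]
    linarith [le_abs_self (c - r), (by positivity : 0 ≤ 2 * √|c - r| * √r)]
  calc (√|1 - r / c|)⁻¹ = √c / √|c - r| := by
        rw [one_sub_div hc.ne', abs_div, abs_of_pos hc, Real.sqrt_div (abs_nonneg _), inv_div]
    _ ≤ (√|c - r| + √r) / √|c - r| := by gcongr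
    _ = 1 + √r * (√|c - r|)⁻¹ := by rw [add_div, div_self hne, div_eq_mul_inv]

lemma one_add_mul_ne_zero (hr : 0 ≤ r) (hne : r ≠ ‖z‖⁻¹) : 1 + r * z ≠ 0 := by
  rintro h
  refine hne (eq_inv_of_mul_eq_one_left ?_)
  simpa [abs_of_nonneg hr] using congrArg norm (eq_neg_of_add_eq_zero_right h)

lemma norm_inv_sqrt_one_add_mul_le (hr : 0 ≤ r) (hne : r ≠ ‖z‖⁻¹) :
    ‖((1 + r * z).sqrt)⁻¹‖ ≤ 1 + √r * (√|‖z‖⁻¹ - r|)⁻¹ := by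
  rcases eq_or_ne z 0 with rfl | hz
  · simpa using by positivity
  have hc : 0 < ‖z‖⁻¹ := inv_pos.mpr (norm_pos_iff.mpr hz)
  refine le_trans ?_ (inv_sqrt_abs_one_sub_div_le hc hr hne)
  rw [norm_inv, norm_complex_sqrt, div_inv_eq_mul]
  have hpos : 0 < |1 - r * ‖z‖| := abs_pos.mpr fun h => hne
    (eq_inv_of_mul_eq_one_left (sub_eq_zero.mp h).symm)
  gcongr
  exact abs_one_sub_mul_norm_le hr z

lemma ae_weight_mul_norm_inv_sqrt_le (n : ℕ) (z : ℂ) : ∀ᵐ r ∂volume.restrict (Ioi (0 : ℝ)),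
    r ^ n * (rexp (-r) / √r) * ‖((1 + r * z).sqrt)⁻¹‖ ≤
      r ^ n * (rexp (-r) / √r) + r ^ n * rexp (-r) * (√|‖z‖⁻¹ - r|)⁻¹ := by
  filter_upwards [ae_restrict_mem measurableSet_Ioi,
    ae_restrict_of_ae (Measure.ae_ne volume ‖z‖⁻¹)] with r (hr : 0 < r) hne
  refine (mul_le_mul_of_nonneg_left (norm_inv_sqrt_one_add_mul_le hr.le hne)
    (by positivity)).trans_eq ?_
  field_simp

lemma exists_integral_weight_mul_norm_inv_sqrt_le (n : ℕ) : ∃ C : ℝ, ∀ z : ℂ,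
    IntegrableOn (fun r : ℝ => r ^ n * (rexp (-r) / √r) * ‖((1 + r * z).sqrt)⁻¹‖) (Ioi 0) ∧
    ∫ r in Ioi (0 : ℝ), r ^ n * (rexp (-r) / √r) * ‖((1 + r * z).sqrt)⁻¹‖ ≤ C := by
  refine ⟨Real.Gamma (n + 1 / 2) + ((∫ r in Ioi (0 : ℝ), r ^ n * rexp (-r)) +
    n.factorial * ∫ x in Icc (-1 : ℝ) 1, (√|x|)⁻¹), fun z => ?_⟩
  obtain ⟨hsing, hsing_le⟩ := integrableOn_mul_comp_sub_and_setIntegral_le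
    measurableSet_Ioi measurableSet_Icc (integrableOn_pow_mul_exp_neg n)
    (fun r (hr : 0 < r) => by positivity) (by positivity)
    (fun r (hr : 0 < r) => pow_mul_exp_neg_le_factorial n hr.le) (by fun_prop)
    (fun x => by positivity) integrableOn_inv_sqrt_abs (fun x => inv_sqrt_abs_le_one) ‖z‖⁻¹
  have hreg := integrableOn_pow_mul_exp_neg_div_sqrt n
  have hmaj := hreg.add hsing
  have hle := ae_weight_mul_norm_inv_sqrt_le n z
  have hint : IntegrableOn
      (fun r : ℝ => r ^ n * (rexp (-r) / √r) * ‖((1 + r * z).sqrt)⁻¹‖) (Ioi 0) := by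
    refine hmaj.mono' (hreg.aestronglyMeasurable.mul
      (measurable_inv_sqrt_one_add_mul z).norm.aestronglyMeasurable) ?_
    filter_upwards [hle, ae_restrict_mem measurableSet_Ioi] with r hr (hr₀ : 0 < r)
    rwa [Real.norm_of_nonneg (by positivity)]
  refine ⟨hint, (integral_mono_ae hint hmaj hle).trans ?_⟩
  rw [integral_add' hreg hsing, integral_pow_mul_exp_neg_div_sqrt]
  gcongr

lemma integrableOn_scaledK0_integrand (z : ℂ) : IntegrableOn
    (fun r : ℝ => ((rexp (-r) / √r : ℝ) : ℂ) * ((1 + r * z).sqrt)⁻¹) (Ioi 0) := by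
  obtain ⟨C, hC⟩ := exists_integral_weight_mul_norm_inv_sqrt_le 0
  refine (hC z).1.mono' ((Complex.measurable_ofReal.comp (by fun_prop)).mul
    (measurable_inv_sqrt_one_add_mul z)).aestronglyMeasurable (Eventually.of_forall fun r => ?_)
  rw [norm_mul, Complex.norm_real, Real.norm_of_nonneg (by positivity), pow_zero, one_mul]

lemma exists_norm_scaledK0_le : ∃ C : ℝ, ∀ z : ℂ, ‖scaledK0 z‖ ≤ C := by
  obtain ⟨C, hC⟩ := exists_integral_weight_mul_norm_inv_sqrt_le 0
  refine ⟨C, fun z => (norm_integral_le_of_norm_le (hC z).1 ?_).trans (hC z).2⟩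
  refine Eventually.of_forall fun r => ?_
  rw [norm_mul, Complex.norm_real, Real.norm_of_nonneg (by positivity), pow_zero, one_mul]

lemma weight_mul_one_sub_eq (r : ℝ) (z : ℂ) : ((rexp (-r) / √r : ℝ) : ℂ) * (1 - r * z / 2) =
    ((r ^ 0 * (rexp (-r) / √r) : ℝ) : ℂ) - ((r ^ 1 * (rexp (-r) / √r) : ℝ) : ℂ) * (z / 2) := by
  push_cast
  ring

lemma integrableOn_weight_mul_one_sub (z : ℂ) : IntegrableOn
    (fun r : ℝ => ((rexp (-r) / √r : ℝ) : ℂ) * (1 - r * z / 2)) (Ioi 0) := by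
  simp only [weight_mul_one_sub_eq]
  exact (integrableOn_pow_mul_exp_neg_div_sqrt 0).ofReal.sub
    ((integrableOn_pow_mul_exp_neg_div_sqrt 1).ofReal.mul_const _)

lemma integral_weight_mul_one_sub (z : ℂ) :
    ∫ r in Ioi (0 : ℝ), ((rexp (-r) / √r : ℝ) : ℂ) * (1 - r * z / 2) = √π * (1 - z / 4) := by
  have hΓ : Real.Gamma ((1 : ℕ) + 1 / 2) = √π / 2 := by
    rw [Nat.cast_one, add_comm, Real.Gamma_add_one (by norm_num), Real.Gamma_one_half_eq]
    ring
  simp only [weight_mul_one_sub_eq]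
  rw [integral_sub (integrableOn_pow_mul_exp_neg_div_sqrt 0).ofReal
      ((integrableOn_pow_mul_exp_neg_div_sqrt 1).ofReal.mul_const _), integral_mul_const,
    integral_complex_ofReal, integral_complex_ofReal, integral_pow_mul_exp_neg_div_sqrt,
    integral_pow_mul_exp_neg_div_sqrt, hΓ, Nat.cast_zero, zero_add, Real.Gamma_one_half_eq]
  push_cast
  ring

lemma exists_norm_scaledK0_sub_le :
    ∃ C : ℝ, ∀ z : ℂ, ‖scaledK0 z - √π * (1 - z / 4)‖ ≤ C * ‖z‖ ^ 2 := by
  obtain ⟨C, hC⟩ := exists_integral_weight_mul_norm_inv_sqrt_le 2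
  refine ⟨C, fun z => ?_⟩
  rw [← integral_weight_mul_one_sub, scaledK0,
    ← integral_sub (integrableOn_scaledK0_integrand z) (integrableOn_weight_mul_one_sub z)]
  refine (norm_integral_le_of_norm_le ((hC z).1.mul_const (‖z‖ ^ 2)) ?_).trans ?_
  · filter_upwards [ae_restrict_mem measurableSet_Ioi,
      ae_restrict_of_ae (Measure.ae_ne volume ‖z‖⁻¹)] with r (hr : 0 < r) hne
    rw [← mul_sub, norm_mul, Complex.norm_real, Real.norm_of_nonneg (by positivity)]
    refine (mul_le_mul_of_nonneg_left (norm_inv_complex_sqrt_one_add_sub_le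
      (one_add_mul_ne_zero hr.le hne)) (by positivity)).trans_eq ?_
    rw [norm_mul, Complex.norm_real, Real.norm_of_nonneg hr.le]
    ring
  · rw [integral_mul_const]
    exact mul_le_mul_of_nonneg_right (hC z).2 (by positivity)

lemma stronglyMeasurable_scaledK0 : StronglyMeasurable scaledK0 := by
  have hkernel : Measurable fun q : ℂ × ℝ =>
      ((rexp (-q.2) / √q.2 : ℝ) : ℂ) * ((1 + q.2 * q.1).sqrt)⁻¹ :=
    (Complex.measurable_ofReal.comp (by fun_prop)).mul
      (measurable_complex_sqrt.comp (by fun_prop)).inv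
  exact hkernel.stronglyMeasurable.integral_prod_right

lemma one_add_mul_mem_slitPlane (hr : 0 < r) (hz : z.im ≠ 0) :
    1 + r * z ∈ Complex.slitPlane := by
  right
  simpa using ⟨hr.ne', hz⟩

lemma abs_im_div_norm_le_norm_one_add_mul (r : ℝ) (z : ℂ) :
    |z.im| / ‖z‖ ≤ ‖1 + r * z‖ := by
  refine div_le_of_le_mul₀ (norm_nonneg _) (norm_nonneg _) ?_
  have him : ((1 + r * z) * conj z).im = -z.im := by
    rw [add_mul, mul_assoc, Complex.mul_conj, one_mul, ← Complex.ofReal_mul, Complex.add_im,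
      Complex.conj_im, Complex.ofReal_im, add_zero]
  calc |z.im| = |((1 + r * z) * conj z).im| := by rw [him, abs_neg]
    _ ≤ ‖(1 + r * z) * conj z‖ := Complex.abs_im_le_norm _
    _ = ‖1 + r * z‖ * ‖z‖ := by rw [norm_mul, Complex.norm_conj]

lemma differentiableAt_inv_sqrt_one_add_mul (hr : 0 < r) (hz : z.im ≠ 0) :
    DifferentiableAt ℂ (fun z : ℂ => ((1 + r * z).sqrt)⁻¹) z := by
  have hmem := one_add_mul_mem_slitPlane hr hz
  have hsqrt : DifferentiableAt ℂ (fun z : ℂ => (1 + r * z).sqrt) z := by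
    fun_prop (disch := exact hmem)
  exact hsqrt.inv (complex_sqrt_ne_zero (Complex.slitPlane_ne_zero hmem))

theorem differentiableAt_scaledK0 (hz : z.im ≠ 0) : DifferentiableAt ℂ scaledK0 z := by
  have hz₀ : z ≠ 0 := by
    rintro rfl
    exact hz Complex.zero_im
  have hpos : 0 < |z.im| / ‖z‖ := div_pos (abs_pos.mpr hz) (norm_pos_iff.mpr hz₀)
  obtain ⟨a, ha, haz⟩ := exists_between hpos
  have hnhds : {w : ℂ | a < |w.im| / ‖w‖} ∈ 𝓝 z :=
    (ContinuousAt.div (by fun_prop) (by fun_prop) (norm_ne_zero_iff.mpr hz₀)).eventually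
      (lt_mem_nhds haz)
  have hint : IntegrableOn (fun r => rexp (-r) / √r * (√a)⁻¹) (Ioi 0) := by
    simpa [IntegrableOn] using (integrableOn_pow_mul_exp_neg_div_sqrt 0).mul_const (√a)⁻¹
  refine differentiableAt_integral_of_dominated hnhds
    (fun w _ => (integrableOn_scaledK0_integrand w).aestronglyMeasurable) ?_ ?_ hint
  · filter_upwards [ae_restrict_mem measurableSet_Ioi] with r hr w (hw : a < |w.im| / ‖w‖)
    have him : w.im ≠ 0 := fun h => hw.not_ge (by simpa [h] using ha.le)
    exact ((differentiableAt_inv_sqrt_one_add_mul hr him).const_mul _).differentiableWithinAt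
  · refine Eventually.of_forall fun r w (hw : a < |w.im| / ‖w‖) => ?_
    rw [norm_mul, Complex.norm_real, Real.norm_of_nonneg (by positivity), norm_inv,
      norm_complex_sqrt]
    gcongr
    exact hw.le.trans (abs_im_div_norm_le_norm_one_add_mul r w)

lemma scaledK0_conj (hz : z.im ≠ 0) : scaledK0 (conj z) = conj (scaledK0 z) := by
  rw [scaledK0, scaledK0, ← integral_conj]
  refine setIntegral_congr_fun measurableSet_Ioi fun r hr => ?_
  have hconj : 1 + r * conj z = conj (1 + r * z) := by simp
  simp only [hconj, complex_sqrt_conj (one_add_mul_mem_slitPlane hr hz), map_mul, map_inv₀,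
    Complex.conj_ofReal]

lemma norm_inv_sqrt_one_add_mul_inv_add_mul_I_le {c : ℝ} (hc : c ≠ 0) (hrc : r ≠ -c) (y : ℝ) :
    ‖((1 + r * (c + y * Complex.I : ℂ)⁻¹).sqrt)⁻¹‖ ≤
      √(‖(c + y * Complex.I : ℂ)‖ / |c|) * ‖((1 + r * (c : ℂ)⁻¹).sqrt)⁻¹‖ := by
  set w : ℂ := c + y * Complex.I with hw
  have hw₀ : w ≠ 0 := fun h => hc (by simpa [hw] using congrArg Complex.re h)
  have hle : |c + r| ≤ ‖w + r‖ := by simpa [hw] using Complex.abs_re_le_norm (w + r)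
  have hpos : 0 < |c + r| := abs_pos.mpr fun h => hrc (by linarith)
  have hnorm_w : ‖1 + r * w⁻¹‖ = ‖w + r‖ / ‖w‖ := by
    rw [← norm_div, add_div, div_self hw₀, div_eq_mul_inv]
  have hnorm_c : ‖1 + r * (c : ℂ)⁻¹‖ = |c + r| / |c| := by
    rw [← Real.norm_eq_abs c, ← Real.norm_eq_abs, ← norm_div, ← Complex.norm_real, add_div,
      div_self hc, div_eq_mul_inv]
    push_cast
    rfl
  rw [norm_inv, norm_inv, norm_complex_sqrt, norm_complex_sqrt, ← Real.sqrt_inv, ← Real.sqrt_inv,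
    ← Real.sqrt_mul (by positivity), hnorm_w, hnorm_c, inv_div, inv_div,
    div_mul_div_cancel₀ (abs_ne_zero.mpr hc)]
  gcongr

lemma tendsto_scaledK0_inv_add_mul_I {c : ℝ} (hc : c ≠ 0) {l : Filter ℝ}
    [l.IsCountablyGenerated] (hl : l ≤ 𝓝 0)
    (hsqrt : ∀ r : ℝ, 0 < r → Tendsto
      (fun y : ℝ => (1 + r * (c + y * Complex.I : ℂ)⁻¹).sqrt) l (𝓝 (1 + r * (c : ℂ)⁻¹).sqrt)) :
    Tendsto (fun y : ℝ => scaledK0 (c + y * Complex.I)⁻¹) l (𝓝 (scaledK0 (c : ℂ)⁻¹)) := by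
  have hnorm : ∀ᶠ y : ℝ in l, ‖(c + y * Complex.I : ℂ)‖ < |c| + 1 := by
    have hcont : Continuous fun y : ℝ => ‖(c + y * Complex.I : ℂ)‖ := by fun_prop
    exact hl (hcont.continuousAt.eventually (gt_mem_nhds (by simp)))
  refine tendsto_integral_filter_of_dominated_convergence
    (fun r => √((|c| + 1) / |c|) * ‖((rexp (-r) / √r : ℝ) : ℂ) * ((1 + r * (c : ℂ)⁻¹).sqrt)⁻¹‖)
    (Eventually.of_forall fun y => (integrableOn_scaledK0_integrand _).aestronglyMeasurable) ?_
    ((integrableOn_scaledK0_integrand _).norm.const_mul _) ?_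
  · filter_upwards [hnorm] with y hy
    filter_upwards [ae_restrict_of_ae (Measure.ae_ne volume (-c))] with r hrc
    rw [norm_mul, norm_mul, mul_left_comm]
    gcongr
    refine (norm_inv_sqrt_one_add_mul_inv_add_mul_I_le hc hrc y).trans ?_
    gcongr
  · filter_upwards [ae_restrict_mem measurableSet_Ioi,
      ae_restrict_of_ae (Measure.ae_ne volume (-c))] with r hr hrc
    refine ((hsqrt r hr).inv₀ (complex_sqrt_ne_zero fun h => hrc ?_)).const_mul _
    have h' : 1 + r * c⁻¹ = 0 := by exact_mod_cast h
    field_simp at h'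
    linarith

lemma tendsto_one_add_mul_inv_add_mul_I {c : ℝ} (hc : c ≠ 0) (r : ℝ) :
    Tendsto (fun y : ℝ => 1 + r * (c + y * Complex.I : ℂ)⁻¹) (𝓝 0) (𝓝 (1 + r * (c : ℂ)⁻¹)) := by
  have hw : Tendsto (fun y : ℝ => (c + y * Complex.I : ℂ)) (𝓝 0) (𝓝 c) := by
    have hcont : Continuous fun y : ℝ => (c + y * Complex.I : ℂ) := by fun_prop
    simpa using hcont.tendsto 0
  exact ((hw.inv₀ (Complex.ofReal_ne_zero.mpr hc)).const_mul _).const_add _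

lemma tendsto_scaledK0_inv_add_mul_I_of_pos {c : ℝ} (hc : 0 < c) :
    Tendsto (fun y : ℝ => scaledK0 (c + y * Complex.I)⁻¹) (𝓝 0) (𝓝 (scaledK0 (c : ℂ)⁻¹)) := by
  refine tendsto_scaledK0_inv_add_mul_I hc.ne' le_rfl fun r hr =>
    (Complex.continuousAt_sqrt (.inl ?_)).tendsto.comp (tendsto_one_add_mul_inv_add_mul_I hc.ne' r)
  rw [← Complex.ofReal_inv, Complex.add_re, Complex.one_re, Complex.re_ofReal_mul,
    Complex.ofReal_re]
  positivity

lemma tendsto_scaledK0_inv_add_mul_I_nhdsLT {c : ℝ} (hc : c ≠ 0) :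
    Tendsto (fun y : ℝ => scaledK0 (c + y * Complex.I)⁻¹) (𝓝[<] 0) (𝓝 (scaledK0 (c : ℂ)⁻¹)) := by
  refine tendsto_scaledK0_inv_add_mul_I hc nhdsWithin_le_nhds fun r hr => ?_
  have hmem : 1 + r * (c : ℂ)⁻¹ ∈ {z : ℂ | 0 ≤ z.im} := by
    rw [← Complex.ofReal_inv, ← Complex.ofReal_mul]
    simp
  refine (continuousOn_complex_sqrt_im_nonneg _ hmem).tendsto.comp (tendsto_nhdsWithin_iff.mpr
    ⟨(tendsto_one_add_mul_inv_add_mul_I hc r).mono_left nhdsWithin_le_nhds, ?_⟩)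
  filter_upwards [self_mem_nhdsWithin] with y (hy : y < 0)
  rw [Complex.add_im, Complex.one_im, Complex.im_ofReal_mul, Complex.inv_im, zero_add]
  refine mul_nonneg hr.le (div_nonneg ?_ (Complex.normSq_nonneg _))
  simpa using hy.le

end ScaledK0

section BesselValues

variable {E : Type*} [NormedAddCommGroup E] [NormedSpace ℝ E] {t : ℝ}

lemma integral_Ioi_eq_integral_cosh (ht : 0 < t) (s : ℝ) (g : ℝ → E) :
    ∫ r in Ioi (t * (1 + s)), g r =
      ∫ u in Ioi 0, (t * Real.sinh u) • g (t * (Real.cosh u + s)) := by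
  have himage : (fun u => t * (Real.cosh u + s)) '' Ici 0 = Ici (t * (1 + s)) := by
    rw [← image_mul_left_Ici ht, ← image_add_const_Ici, ← Real.cosh_bijOn.image_eq, image_image,
      image_image]
  have hinj : InjOn (fun u => t * (Real.cosh u + s)) (Ici 0) := fun u hu v hv h =>
    Real.cosh_injOn hu hv (by simpa [ht.ne'] using h)
  have hderiv (u : ℝ) : HasDerivAt (fun u => t * (Real.cosh u + s)) (t * Real.sinh u) u :=
    ((Real.hasDerivAt_cosh u).add_const s).const_mul t
  rw [← integral_Ici_eq_integral_Ioi, ← integral_Ici_eq_integral_Ioi, ← himage,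
    integral_image_eq_integral_abs_deriv_smul measurableSet_Ici
      (fun u _ => (hderiv u).hasDerivWithinAt) hinj]
  refine setIntegral_congr_fun measurableSet_Ici fun u (hu : 0 ≤ u) => ?_
  simp only [abs_of_nonneg (mul_nonneg ht.le (Real.sinh_nonneg_iff.mpr hu))]

lemma setIntegral_Ioc_eq_setIntegral_cos (ht : 0 < t) (g : ℝ → E) :
    ∫ r in Ioc 0 (2 * t), g r =
      ∫ θ in Ioo 0 π, (t * Real.sin θ) • g (t * (1 - Real.cos θ)) := by
  have himage : (fun θ => t * (1 - Real.cos θ)) '' Icc 0 π = Icc 0 (2 * t) := by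
    rw [← image_image (t * ·) (fun θ => 1 - Real.cos θ), ← image_image (1 - ·) Real.cos,
      Real.bijOn_cos.image_eq, image_const_sub_Icc, image_mul_left_Icc ht.le (by norm_num)]
    ring_nf
  have hinj : InjOn (fun θ => t * (1 - Real.cos θ)) (Icc 0 π) := fun θ hθ φ hφ h =>
    Real.injOn_cos hθ hφ (by simpa [ht.ne'] using h)
  have hderiv (θ : ℝ) : HasDerivAt (fun θ => t * (1 - Real.cos θ)) (t * Real.sin θ) θ := by
    simpa using ((Real.hasDerivAt_cos θ).const_sub 1).const_mul t
  rw [← integral_Icc_eq_integral_Ioc, ← himage,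
    integral_image_eq_integral_abs_deriv_smul measurableSet_Icc
      (fun θ _ => (hderiv θ).hasDerivWithinAt) hinj, integral_Icc_eq_integral_Ioo]
  refine setIntegral_congr_fun measurableSet_Ioo fun θ hθ => ?_
  simp only [abs_of_nonneg (mul_nonneg ht.le (Real.sin_pos_of_mem_Ioo hθ).le)]

lemma mul_div_sqrt_mul_inv_sqrt {a b y : ℝ} (ht : 0 < t) (hy : 0 < y) (ha : 0 ≤ a)
    (hab : a * b = t / 2 * y ^ 2) (e : ℝ) : t * y * (e / √a * (√b)⁻¹) = √(2 * t) * e := by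
  have hprod : √a * √b = √(t / 2) * y := by
    rw [← Real.sqrt_mul ha, hab, Real.sqrt_mul (by positivity), Real.sqrt_sq hy.le]
  have ht_eq : t = √(2 * t) * √(t / 2) := by
    rw [← Real.sqrt_mul (by positivity), show 2 * t * (t / 2) = t ^ 2 by ring, Real.sqrt_sq ht.le]
  have hne : √(t / 2) ≠ 0 := (Real.sqrt_pos.mpr (by positivity)).ne'
  calc t * y * (e / √a * (√b)⁻¹) = t * y * e / (√a * √b) := by ring
    _ = t / √(t / 2) * e := by rw [hprod]; field_simp
    _ = √(2 * t) * e := by rw [(div_eq_iff hne).mpr ht_eq]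

theorem scaledK0_inv_two_mul (ht : 0 < t) :
    scaledK0 (2 * t : ℂ)⁻¹ = ((√(2 * t) * rexp t * K0 t : ℝ) : ℂ) := by
  have hset : Ioi (0 : ℝ) = Ioi (t * (1 + -1)) := by rw [add_neg_cancel, mul_zero]
  rw [scaledK0, hset, integral_Ioi_eq_integral_cosh ht, K0, ← integral_const_mul,
    ← integral_complex_ofReal]
  refine setIntegral_congr_fun measurableSet_Ioi fun u (hu : 0 < u) => ?_
  have hcosh := Real.one_le_cosh u
  have htC : (t : ℂ) ≠ 0 := Complex.ofReal_ne_zero.mpr ht.ne'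
  have hkernel : 1 + ((t * (Real.cosh u + -1) : ℝ) : ℂ) * (2 * t : ℂ)⁻¹ =
      (((Real.cosh u + 1) / 2 : ℝ) : ℂ) := by
    push_cast
    field_simp
    ring
  have hreal := mul_div_sqrt_mul_inv_sqrt (b := (Real.cosh u + 1) / 2) ht (Real.sinh_pos_iff.mpr hu)
    (mul_nonneg ht.le (by linarith : 0 ≤ Real.cosh u + -1))
    (by linear_combination t / 2 * Real.cosh_sq u) (rexp (-(t * (Real.cosh u + -1))))
  simp only [hkernel, complex_sqrt_ofReal (by linarith : 0 ≤ (Real.cosh u + 1) / 2)]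
  rw [mul_assoc, ← Real.exp_add, show t + -(t * Real.cosh u) = -(t * (Real.cosh u + -1)) by ring,
    ← hreal, Complex.real_smul]
  push_cast
  ring

lemma setIntegral_Ioi_two_mul_scaledK0_integrand (ht : 0 < t) :
    ∫ r in Ioi (2 * t), ((rexp (-r) / √r : ℝ) : ℂ) * ((1 + r * (-(2 * t : ℂ)⁻¹)).sqrt)⁻¹ =
      -Complex.I * ((√(2 * t) * rexp (-t) * K0 t : ℝ) : ℂ) := by
  have hset : Ioi (2 * t) = Ioi (t * (1 + 1)) := by rw [one_add_one_eq_two, mul_comm]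
  rw [hset, integral_Ioi_eq_integral_cosh ht, K0,
    ← integral_const_mul, ← integral_complex_ofReal, ← integral_const_mul]
  refine setIntegral_congr_fun measurableSet_Ioi fun u (hu : 0 < u) => ?_
  have hcosh := Real.one_le_cosh u
  have htC : (t : ℂ) ≠ 0 := Complex.ofReal_ne_zero.mpr ht.ne'
  have hkernel : 1 + ((t * (Real.cosh u + 1) : ℝ) : ℂ) * (-(2 * t : ℂ)⁻¹) =
      -(((Real.cosh u - 1) / 2 : ℝ) : ℂ) := by
    push_cast
    field_simp
    ring
  have hnonneg : 0 ≤ (Real.cosh u - 1) / 2 := by linarith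
  have hreal := mul_div_sqrt_mul_inv_sqrt (b := (Real.cosh u - 1) / 2) ht (Real.sinh_pos_iff.mpr hu)
    (by positivity : 0 ≤ t * (Real.cosh u + 1))
    (by linear_combination t / 2 * Real.cosh_sq u) (rexp (-(t * (Real.cosh u + 1))))
  simp only [hkernel]
  rw [Complex.sqrt_neg_of_nonneg (Complex.zero_le_real.mpr hnonneg), complex_sqrt_ofReal hnonneg,
    mul_inv, Complex.inv_I, mul_assoc √(2 * t), ← Real.exp_add,
    show -t + -(t * Real.cosh u) = -(t * (Real.cosh u + 1)) by ring, ← hreal, Complex.real_smul]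
  push_cast
  ring

lemma setIntegral_Ioc_two_mul_scaledK0_integrand (ht : 0 < t) :
    ∫ r in Ioc 0 (2 * t), ((rexp (-r) / √r : ℝ) : ℂ) * ((1 + r * (-(2 * t : ℂ)⁻¹)).sqrt)⁻¹ =
      ((√(2 * t) * rexp (-t) * (π * I0 t) : ℝ) : ℂ) := by
  have hI0 : π * I0 t = ∫ θ in Ioo 0 π, rexp (t * Real.cos θ) := by
    rw [I0, ← mul_assoc, mul_one_div_cancel Real.pi_ne_zero, one_mul,
      intervalIntegral.integral_of_le Real.pi_nonneg, integral_Ioc_eq_integral_Ioo]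
  rw [setIntegral_Ioc_eq_setIntegral_cos ht, hI0, ← integral_const_mul, ← integral_complex_ofReal]
  refine setIntegral_congr_fun measurableSet_Ioo fun θ hθ => ?_
  have htC : (t : ℂ) ≠ 0 := Complex.ofReal_ne_zero.mpr ht.ne'
  have hkernel : 1 + ((t * (1 - Real.cos θ) : ℝ) : ℂ) * (-(2 * t : ℂ)⁻¹) =
      (((1 + Real.cos θ) / 2 : ℝ) : ℂ) := by
    push_cast
    field_simp
    ring
  have hreal := mul_div_sqrt_mul_inv_sqrt (b := (1 + Real.cos θ) / 2) ht
    (Real.sin_pos_of_mem_Ioo hθ) (mul_nonneg ht.le (sub_nonneg.mpr (Real.cos_le_one θ)))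
    (by linear_combination -(t / 2) * Real.sin_sq_add_cos_sq θ) (rexp (-(t * (1 - Real.cos θ))))
  simp only [hkernel, complex_sqrt_ofReal
    (by linarith [Real.neg_one_le_cos θ] : 0 ≤ (1 + Real.cos θ) / 2)]
  rw [mul_assoc, ← Real.exp_add, show -t + t * Real.cos θ = -(t * (1 - Real.cos θ)) by ring,
    ← hreal, Complex.real_smul]
  push_cast
  ring

theorem scaledK0_neg_inv_two_mul (ht : 0 < t) : scaledK0 (-(2 * t : ℂ)⁻¹) =
    ((√(2 * t) * rexp (-t) : ℝ) : ℂ) * (π * I0 t - Complex.I * K0 t) := by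
  have hint := integrableOn_scaledK0_integrand (-(2 * t : ℂ)⁻¹)
  have hunion : Ioc 0 (2 * t) ∪ Ioi (2 * t) = Ioi 0 := Ioc_union_Ioi_eq_Ioi (by positivity)
  rw [← hunion, integrableOn_union] at hint
  rw [scaledK0, ← hunion, setIntegral_union (Ioc_disjoint_Ioi le_rfl) measurableSet_Ioi hint.1
    hint.2, setIntegral_Ioc_two_mul_scaledK0_integrand ht,
    setIntegral_Ioi_two_mul_scaledK0_integrand ht]
  push_cast
  ring

end BesselValues

section BesselProduct

/-- The function `-2 i w K₀(w) K₀(-w)` on the upper half-plane, written through `scaledK0` so that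
the exponential factors cancel. On `(0, ∞)` it takes its boundary values from above. -/
noncomputable def besselProduct (w : ℂ) : ℂ := scaledK0 (2 * w)⁻¹ * scaledK0 (-(2 * w)⁻¹)

/-- The cubic polynomial `H (π² - H²)` in `H = besselProduct` whose integral is moved from the
positive to the imaginary half-line. It is integrable because `H` tends to `π` at infinity. -/
noncomputable def besselCubic (w : ℂ) : ℂ := besselProduct w * (π ^ 2 - besselProduct w ^ 2)

variable {t : ℝ} {w : ℂ}

lemma exists_norm_besselProduct_le : ∃ B : ℝ, ∀ w : ℂ, ‖besselProduct w‖ ≤ B := by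
  obtain ⟨B, hB⟩ := exists_norm_scaledK0_le
  refine ⟨B * B, fun w => ?_⟩
  rw [besselProduct, norm_mul]
  have hB₀ : 0 ≤ B := (norm_nonneg _).trans (hB 0)
  gcongr <;> exact hB _

lemma exists_norm_scaledK0_mul_scaledK0_neg_sub_pi_le_of_norm_le_one : ∃ C : ℝ, 0 ≤ C ∧
    ∀ z : ℂ, ‖z‖ ≤ 1 → ‖scaledK0 z * scaledK0 (-z) - π‖ ≤ C * ‖z‖ ^ 2 := by
  obtain ⟨B, hB⟩ := exists_norm_scaledK0_le
  obtain ⟨C, hC⟩ := exists_norm_scaledK0_sub_le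
  have hB₀ : 0 ≤ B := (norm_nonneg _).trans (hB 0)
  have hC₀ : 0 ≤ C := by simpa using (norm_nonneg _).trans (hC 1)
  refine ⟨B * C + C * (√π * 2) + π, by positivity, fun z hz => ?_⟩
  have hsqrt_pi : (√π : ℂ) * √π = π := by
    rw [← Complex.ofReal_mul, Real.mul_self_sqrt Real.pi_nonneg]
  have hsplit : scaledK0 z * scaledK0 (-z) - π =
      scaledK0 z * (scaledK0 (-z) - √π * (1 - -z / 4)) +
        (scaledK0 z - √π * (1 - z / 4)) * (√π * (1 + z / 4)) - π * (z ^ 2 / 16) := by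
    linear_combination (1 - z ^ 2 / 16) * hsqrt_pi
  have hneg : ‖scaledK0 (-z) - √π * (1 - -z / 4)‖ ≤ C * ‖z‖ ^ 2 := by simpa using hC (-z)
  have hlin : ‖(√π * (1 + z / 4) : ℂ)‖ ≤ √π * 2 := by
    rw [norm_mul, Complex.norm_real, Real.norm_of_nonneg (Real.sqrt_nonneg _)]
    gcongr
    refine (norm_add_le _ _).trans ?_
    rw [norm_one, norm_div, RCLike.norm_ofNat]
    linarith
  have hquad : ‖(π * (z ^ 2 / 16) : ℂ)‖ ≤ π * ‖z‖ ^ 2 := by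
    rw [norm_mul, norm_div, norm_pow, Complex.norm_real, Real.norm_of_nonneg Real.pi_nonneg,
      RCLike.norm_ofNat]
    gcongr
    linarith [sq_nonneg ‖z‖]
  calc ‖scaledK0 z * scaledK0 (-z) - π‖
      ≤ B * (C * ‖z‖ ^ 2) + C * ‖z‖ ^ 2 * (√π * 2) + π * ‖z‖ ^ 2 := by
        rw [hsplit]
        refine (norm_sub_le _ _).trans (add_le_add ((norm_add_le _ _).trans ?_) hquad)
        rw [norm_mul, norm_mul]
        gcongr
        exacts [hB z, hC z]
    _ = (B * C + C * (√π * 2) + π) * ‖z‖ ^ 2 := by ring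

lemma exists_norm_besselProduct_sub_pi_le :
    ∃ C : ℝ, ∀ w : ℂ, ‖besselProduct w - π‖ ≤ C / (1 + ‖w‖ ^ 2) := by
  obtain ⟨B, hB⟩ := exists_norm_besselProduct_le
  obtain ⟨C, hC₀, hC⟩ := exists_norm_scaledK0_mul_scaledK0_neg_sub_pi_le_of_norm_le_one
  have hB₀ : 0 ≤ B := (norm_nonneg _).trans (hB 0)
  refine ⟨2 * (B + π) + C, fun w => (le_div_iff₀ (by positivity)).mpr ?_⟩
  rcases le_total ‖w‖ 1 with hw | hw
  · have hbounded : ‖besselProduct w - π‖ ≤ B + π := by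
      refine (norm_sub_le _ _).trans ?_
      rw [Complex.norm_real, Real.norm_of_nonneg Real.pi_nonneg]
      gcongr
      exact hB w
    calc ‖besselProduct w - π‖ * (1 + ‖w‖ ^ 2) ≤ (B + π) * (1 + 1 ^ 2) := by gcongr
      _ ≤ 2 * (B + π) + C := by linarith
  · have hinv : ‖(2 * w)⁻¹‖ = 1 / (2 * ‖w‖) := by
      rw [norm_inv, norm_mul, RCLike.norm_ofNat, one_div]
    have hinv_le : ‖(2 * w)⁻¹‖ ≤ 1 := by
      rw [hinv, div_le_one (by positivity)]
      linarith
    calc ‖besselProduct w - π‖ * (1 + ‖w‖ ^ 2)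
        ≤ C * ‖(2 * w)⁻¹‖ ^ 2 * (‖w‖ ^ 2 + ‖w‖ ^ 2) := by
          gcongr
          exacts [hC _ hinv_le, one_le_pow₀ hw]
      _ = C / 2 := by
          rw [hinv]
          field_simp
          ring
      _ ≤ 2 * (B + π) + C := by linarith [Real.pi_pos]

lemma exists_norm_besselCubic_le :
    ∃ C : ℝ, ∀ w : ℂ, ‖besselCubic w‖ ≤ C / (1 + ‖w‖ ^ 2) := by
  obtain ⟨B, hB⟩ := exists_norm_besselProduct_le
  obtain ⟨C, hC⟩ := exists_norm_besselProduct_sub_pi_le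
  have hB₀ : 0 ≤ B := (norm_nonneg _).trans (hB 0)
  refine ⟨B * (B + π) * C, fun w => ?_⟩
  have hfactor : besselCubic w =
      -(besselProduct w * (besselProduct w + π) * (besselProduct w - π)) := by
    rw [besselCubic]
    ring
  have hadd : ‖besselProduct w + π‖ ≤ B + π := by
    refine (norm_add_le _ _).trans ?_
    rw [Complex.norm_real, Real.norm_of_nonneg Real.pi_nonneg]
    gcongr
    exact hB w
  rw [hfactor, norm_neg, norm_mul, norm_mul, mul_div_assoc]
  gcongr
  exacts [hB w, hC w]

lemma differentiableAt_besselProduct (hw : w.im ≠ 0) : DifferentiableAt ℂ besselProduct w := by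
  have hw₀ : 2 * w ≠ 0 := mul_ne_zero two_ne_zero fun h => hw (h ▸ Complex.zero_im)
  have him : ((2 * w)⁻¹).im ≠ 0 := by
    rw [Complex.inv_im]
    exact div_ne_zero (by simpa using hw) (Complex.normSq_eq_zero.not.mpr hw₀)
  have hinv : DifferentiableAt ℂ (fun w : ℂ => (2 * w)⁻¹) w := by fun_prop (disch := exact hw₀)
  have him_neg : (-(2 * w)⁻¹).im ≠ 0 := by rwa [Complex.neg_im, neg_ne_zero]
  exact ((differentiableAt_scaledK0 him).fun_comp' w hinv).mul
    ((differentiableAt_scaledK0 him_neg).fun_comp' w hinv.neg)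

lemma differentiableAt_besselCubic (hw : w.im ≠ 0) : DifferentiableAt ℂ besselCubic w :=
  (differentiableAt_besselProduct hw).mul
    (((differentiableAt_besselProduct hw).pow 2).const_sub _)

lemma stronglyMeasurable_besselProduct_ofReal :
    StronglyMeasurable fun t : ℝ => besselProduct t :=
  (stronglyMeasurable_scaledK0.comp_measurable (by fun_prop)).mul
    (stronglyMeasurable_scaledK0.comp_measurable (by fun_prop))

-- On the imaginary axis the two arguments `±(2 w)⁻¹` are complex conjugates.
lemma besselProduct_mul_I {y : ℝ} (hy : y ≠ 0) :
    besselProduct (y * Complex.I) = Complex.normSq (scaledK0 (2 * (y * Complex.I))⁻¹) := by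
  have him : ((2 * (y * Complex.I))⁻¹).im ≠ 0 := by simpa using hy
  have hconj : -(2 * (y * Complex.I))⁻¹ = conj (2 * (y * Complex.I))⁻¹ := by
    rw [map_inv₀, map_mul, map_mul, Complex.conj_ofReal, Complex.conj_I, Complex.conj_ofNat,
      mul_neg, mul_neg, inv_neg]
  rw [besselProduct, hconj, scaledK0_conj him, Complex.mul_conj]

lemma besselCubic_mul_I_im {y : ℝ} (hy : y ≠ 0) : (besselCubic (y * Complex.I)).im = 0 := by
  rw [besselCubic, besselProduct_mul_I hy]
  norm_cast

lemma tendsto_besselProduct_add_mul_I (ht : 0 < t) :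
    Tendsto (fun ε : ℝ => besselProduct (t + ε * Complex.I)) (𝓝[>] 0) (𝓝 (besselProduct t)) := by
  have hright : Tendsto (fun ε : ℝ => 2 * ε) (𝓝[>] 0) (𝓝 0) := by
    have hcont : Continuous fun ε : ℝ => 2 * ε := by fun_prop
    simpa using (hcont.tendsto 0).mono_left nhdsWithin_le_nhds
  have hleft : Tendsto (fun ε : ℝ => -(2 * ε)) (𝓝[>] 0) (𝓝[<] 0) := by
    refine tendsto_nhdsWithin_iff.mpr ⟨by simpa using hright.neg, ?_⟩
    filter_upwards [self_mem_nhdsWithin] with ε (hε : 0 < ε)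
    simpa using hε
  have hpos := (tendsto_scaledK0_inv_add_mul_I_of_pos (c := 2 * t) (by positivity)).comp hright
  have hneg := (tendsto_scaledK0_inv_add_mul_I_nhdsLT (c := -(2 * t)) (by linarith)).comp hleft
  convert hpos.mul hneg using 2
  · rw [besselProduct, Function.comp_apply, Function.comp_apply, ← inv_neg]
    push_cast
    ring_nf
  · rw [besselProduct, ← inv_neg]
    push_cast
    rfl

lemma tendsto_besselCubic_add_mul_I (ht : 0 < t) :
    Tendsto (fun ε : ℝ => besselCubic (t + ε * Complex.I)) (𝓝[>] 0) (𝓝 (besselCubic t)) :=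
  (tendsto_besselProduct_add_mul_I ht).mul
    (((tendsto_besselProduct_add_mul_I ht).pow 2).const_sub _)

theorem re_integral_besselCubic : (∫ t in Ioi (0 : ℝ), besselCubic t).re = 0 := by
  obtain ⟨C, hC⟩ := exists_norm_besselCubic_le
  exact re_integral_Ioi_eq_zero_of_tendsto
    (fun w hw => (differentiableAt_besselCubic (ne_of_gt hw.2)).differentiableWithinAt)
    (fun w _ => hC w) (fun y hy => besselCubic_mul_I_im hy.ne')
    fun t ht => tendsto_besselCubic_add_mul_I ht

lemma integrableOn_besselCubic : IntegrableOn (fun t : ℝ => besselCubic t) (Ioi 0) := by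
  obtain ⟨C, hC⟩ := exists_norm_besselCubic_le
  refine integrableOn_Ioi_of_norm_le_div_one_add_sq (C := C)
    (stronglyMeasurable_besselProduct_ofReal.mul (stronglyMeasurable_const.sub
      (stronglyMeasurable_besselProduct_ofReal.pow 2))).aestronglyMeasurable fun t _ => ?_
  simpa using hC t

lemma besselProduct_ofReal (ht : 0 < t) : besselProduct t =
    ((2 * π * t * I0 t * K0 t : ℝ) : ℂ) + ((-(2 * t * K0 t ^ 2) : ℝ) : ℂ) * Complex.I := by
  have hcancel : √(2 * t) * rexp t * K0 t * (√(2 * t) * rexp (-t)) = 2 * t * K0 t := by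
    have hsqrt := Real.mul_self_sqrt (by positivity : 0 ≤ 2 * t)
    have hexp : rexp t * rexp (-t) = 1 := by rw [← Real.exp_add, add_neg_cancel, Real.exp_zero]
    linear_combination rexp t * rexp (-t) * K0 t * hsqrt + 2 * t * K0 t * hexp
  rw [besselProduct, scaledK0_inv_two_mul ht, scaledK0_neg_inv_two_mul ht, ← mul_assoc,
    ← Complex.ofReal_mul, hcancel]
  push_cast
  ring

lemma besselProduct_ofReal_re (ht : 0 < t) :
    (besselProduct t).re = 2 * π * t * I0 t * K0 t := by
  rw [besselProduct_ofReal ht, Complex.add_re, Complex.re_ofReal_mul, Complex.ofReal_re,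
    Complex.I_re, mul_zero, add_zero]

lemma besselProduct_ofReal_im (ht : 0 < t) : (besselProduct t).im = -(2 * t * K0 t ^ 2) := by
  rw [besselProduct_ofReal ht, Complex.add_im, Complex.im_ofReal_mul, Complex.ofReal_im,
    Complex.I_im, mul_one, zero_add]

lemma besselCubic_ofReal_re (ht : 0 < t) : (besselCubic t).re =
    24 * π * (I0 t * K0 t ^ 5 * t ^ 3) -
      8 * π ^ 3 * (I0 t * K0 t * (I0 t ^ 2 * K0 t ^ 2 - 1 / (4 * t ^ 2)) * t ^ 3) := by
  have hre (z : ℂ) : (z * (π ^ 2 - z ^ 2)).re = π ^ 2 * z.re - z.re ^ 3 + 3 * z.re * z.im ^ 2 := by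
    rw [← Complex.ofReal_pow, pow_two z, Complex.mul_re, Complex.sub_re, Complex.sub_im,
      Complex.mul_re, Complex.mul_im, Complex.ofReal_re, Complex.ofReal_im]
    ring
  rw [besselCubic, hre, besselProduct_ofReal_re ht, besselProduct_ofReal_im ht]
  field_simp
  ring

lemma integrableOn_I0_mul_K0_pow_five_mul_pow_three :
    IntegrableOn (fun t => I0 t * K0 t ^ 5 * t ^ 3) (Ioi 0) := by
  obtain ⟨B, hB⟩ := exists_norm_besselProduct_le
  obtain ⟨C, hC⟩ := exists_norm_besselProduct_sub_pi_le
  have hB₀ : 0 ≤ B := (norm_nonneg _).trans (hB 0)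
  have hmeas_re := Complex.measurable_re.comp stronglyMeasurable_besselProduct_ofReal.measurable
  have hmeas_im := Complex.measurable_im.comp stronglyMeasurable_besselProduct_ofReal.measurable
  have hint : IntegrableOn (fun t : ℝ =>
      (besselProduct t).re * (besselProduct t).im * (besselProduct t).im) (Ioi 0) := by
    refine integrableOn_Ioi_of_norm_le_div_one_add_sq (C := B * B * C)
      ((hmeas_re.mul hmeas_im).mul hmeas_im).aestronglyMeasurable fun t _ => ?_
    have him : |(besselProduct t).im| ≤ C / (1 + t ^ 2) := by
      simpa using (Complex.abs_im_le_norm _).trans (hC t)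
    rw [norm_mul, norm_mul, mul_div_assoc]
    gcongr
    exacts [(Complex.abs_re_le_norm _).trans (hB t), (Complex.abs_im_le_norm _).trans (hB t), him]
  refine IntegrableOn.congr_fun (hint.const_mul (8 * π)⁻¹) (fun t (ht : 0 < t) => ?_)
    measurableSet_Ioi
  simp only [besselProduct_ofReal_re ht, besselProduct_ofReal_im ht]
  field_simp
  ring

lemma integrableOn_I0_mul_K0_mul_sub_mul_pow_three : IntegrableOn
    (fun t => I0 t * K0 t * (I0 t ^ 2 * K0 t ^ 2 - 1 / (4 * t ^ 2)) * t ^ 3) (Ioi 0) := by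
  refine IntegrableOn.congr_fun (((integrableOn_I0_mul_K0_pow_five_mul_pow_three.const_mul
    (24 * π)).sub integrableOn_besselCubic.re).const_mul (8 * π ^ 3)⁻¹)
    (fun t (ht : 0 < t) => ?_) measurableSet_Ioi
  simp only [Pi.sub_apply, RCLike.re_eq_complex_re, besselCubic_ofReal_re ht, sub_sub_cancel]
  exact inv_mul_cancel_left₀ (by positivity) _

end BesselProduct

theorem IKM153_alternative :
    (∫ t in Ioi (0:ℝ), I0 t * (K0 t)^5 * t^3)
    = (π^2/3) * ∫ t in Ioi (0:ℝ),
        I0 t * K0 t * ((I0 t)^2 * (K0 t)^2 - 1/(4*t^2)) * t^3 := by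
  have hre : ∫ t in Ioi (0 : ℝ), (besselCubic t).re = 0 :=
    (integral_re integrableOn_besselCubic).trans re_integral_besselCubic
  rw [setIntegral_congr_fun measurableSet_Ioi fun t ht => besselCubic_ofReal_re ht,
    integral_sub (integrableOn_I0_mul_K0_pow_five_mul_pow_three.const_mul _)
      (integrableOn_I0_mul_K0_mul_sub_mul_pow_three.const_mul _),
    integral_const_mul, integral_const_mul] at hre
  refine mul_left_cancel₀ (by positivity : 24 * π ≠ 0) ?_
  linear_combination hre
end
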